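/- arXiv:1310.0701 — 5 statements merged into one kernel-verified Lean document; each statement's English description precedes it below -/
import Mathlib

section
/- Let G be a compact Hausdorff topological group with normalized Haar probability measure μ, and let φ : G → ℝ be continuous. Then the kernel (g,h) ↦ φ(g h⁻¹) is restricted negative definite on G (i.e. for every n, all g₁,…,gₙ ∈ G and all ξ₁,…,ξₙ ∈ ℂ with ∑ᵢ ξᵢ = 0, the real part of ∑_{i,j} φ(gᵢ gⱼ⁻¹) ξᵢ conj(ξⱼ) is ≤ 0) if and only if for every continuous function f : G → ℂ with ∫_G f dμ = 0 one has Re ( ∫_G ∫_G φ(g h⁻¹) f(g) conj(f(h)) dμ(g) dμ(h) ) ≤ 0. -/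
/-!
Write `Q(ν) = ∬ K(x, y) dν(x) dν̄(y)` for a continuous kernel `K` on a compact space. The two
conditions say that `Re Q ≤ 0` on the mass-zero measures which are finitely supported, respectively
which have a continuous density. By uniform continuity of `K`, `Q(ν)` hardly changes when each piece
`νᵢ` of a finite decomposition of `ν` into pieces with small support is replaced by another piece of
the same mass nearby. A density is concentrated on points by cutting it with a partition of unity;
a point mass is spread out by a bump function, whose integral is nonzero because nonempty open
sets have positive measure.
-/

open MeasureTheory Topology ComplexConjugate

namespace RestrictedNegDef

variable {X Y 𝕜 ι : Type*} [RCLike 𝕜]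

/-- The quadratic form `∑ᵢⱼ K(pᵢ, pⱼ) ξᵢ ξ̄ⱼ` of a kernel `K` at the finitely supported measure with
masses `ξᵢ` at the points `pᵢ`; the points may repeat. -/
def discreteForm [Fintype ι] (K : X × X → 𝕜) (p : ι → X) (ξ : ι → 𝕜) : 𝕜 :=
  ∑ i, ∑ j, K (p i, p j) * ξ i * conj (ξ j)

/-- Restricted negative definite kernels: the real part of the quadratic form of `K` is nonpositive
at finitely supported measures of total mass zero. Kernels are uncurried, may take values in `ℝ` or
`ℂ`, and are not required to be symmetric. -/
def IsRestrictedNegDef (K : X × X → 𝕜) : Prop :=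
  ∀ (n : ℕ) (p : Fin n → X) (ξ : Fin n → 𝕜), ∑ i, ξ i = 0 → RCLike.re (discreteForm K p ξ) ≤ 0

theorem re_nonpos_of_forall_exists_dist_lt {z : 𝕜}
    (h : ∀ δ > 0, ∃ w : 𝕜, RCLike.re w ≤ 0 ∧ dist z w < δ) : RCLike.re z ≤ 0 :=
  (isClosed_le RCLike.continuous_re continuous_const).closure_subset (Metric.mem_closure_iff.2 h)

variable [TopologicalSpace X] [TopologicalSpace Y] [CompactSpace Y]

theorem continuous_integral_right {E : Type*} [NormedAddCommGroup E] [NormedSpace ℝ E]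
    [MeasurableSpace Y] [OpensMeasurableSpace Y] (ν : Measure Y) [IsFiniteMeasure ν]
    {F : X × Y → E} (hF : Continuous F) : Continuous fun x ↦ ∫ y, F (x, y) ∂ν := by
  rw [← continuousOn_univ]
  exact continuousOn_integral_of_compact_support isCompact_univ
    (f := Function.curry F) hF.continuousOn fun _ y _ hy ↦ absurd (Set.mem_univ y) hy

variable [CompactSpace X]

theorem exists_mem_nhds_forall_dist_lt [R1Space X] {E : Type*} [PseudoMetricSpace E]
    {K : X × X → E} (hK : Continuous K) {ε : ℝ} (hε : 0 < ε) :
    ∃ U : X → Set X, (∀ p, U p ∈ 𝓝 p) ∧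
      ∀ p q, ∀ x ∈ U p, ∀ y ∈ U q, dist (K (x, y)) (K (p, q)) < ε := by
  let _ : UniformSpace X := uniformSpaceOfCompactR1
  have hunif := CompactSpace.uniformContinuous_of_continuous hK (Metric.dist_mem_uniformity hε)
  rw [Filter.mem_map, uniformity_prod_eq_comap_prod, Filter.mem_comap] at hunif
  obtain ⟨T, hT, hTK⟩ := hunif
  obtain ⟨V, hV, hVT⟩ := Filter.mem_prod_same_iff.1 hT
  refine ⟨fun p ↦ UniformSpace.ball p V, fun p ↦ UniformSpace.ball_mem_nhds p hV,
    fun p q x hx y hy ↦ ?_⟩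
  rw [dist_comm]
  exact @hTK ((p, q), (x, y)) (hVT ⟨hx, hy⟩)

theorem exists_partitionOfUnity_isSubordinate_of_mem_nhds [R1Space X] {U : X → Set X}
    (hU : ∀ x, U x ∈ 𝓝 x) :
    ∃ (n : ℕ) (p : Fin n → X) (ρ : PartitionOfUnity (Fin n) X),
      ρ.IsSubordinate fun i ↦ U (p i) := by
  obtain ⟨t, ht⟩ := CompactSpace.elim_nhds_subcover (fun x ↦ interior (U x))
    fun x ↦ interior_mem_nhds.2 (hU x)
  let p : Fin t.card → X := fun i ↦ t.equivFin.symm i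
  have hcover : Set.univ ⊆ ⋃ i, interior (U (p i)) := by
    rw [t.equivFin.symm.surjective.iUnion_comp fun x : t ↦ interior (U x)]
    simpa [Set.iUnion_subtype] using ht.ge
  obtain ⟨ρ, hρ⟩ := PartitionOfUnity.exists_isSubordinate_of_locallyFinite isClosed_univ
    (fun i ↦ interior (U (p i))) (fun _ ↦ isOpen_interior) (locallyFinite_of_finite _) hcover
  exact ⟨t.card, p, ρ, fun i ↦ (hρ i).trans interior_subset⟩

variable [MeasurableSpace X] [OpensMeasurableSpace X] [MeasurableSpace Y] [OpensMeasurableSpace Y]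
  (μ : Measure X) [IsFiniteMeasure μ] (ν : Measure Y) [IsFiniteMeasure ν]

theorem integrable_of_continuous {E : Type*} [NormedAddCommGroup E] {f : X → E}
    (hf : Continuous f) : Integrable f μ :=
  hf.integrable_of_hasCompactSupport (.of_compactSpace f)

theorem exists_continuousMap_integral_eq_one [R1Space X] [μ.IsOpenPosMeasure] {p : X} {U : Set X}
    (hU : U ∈ 𝓝 p) :
    ∃ v : C(X, ℝ), (∀ x, 0 ≤ v x) ∧ Function.support v ⊆ U ∧ ∫ x, v x ∂μ = 1 := by
  obtain ⟨u, hu_one, hu_zero, hu_supp, hu_mem⟩ := exists_continuous_one_zero_of_isCompact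
    isCompact_singleton isOpen_interior.isClosed_compl
    (Set.disjoint_compl_right_iff_subset.2
      (Set.singleton_subset_iff.2 (mem_interior_iff_mem_nhds.2 hU)))
  have hpos : 0 < ∫ x, u x ∂μ :=
    u.continuous.integral_pos_of_hasCompactSupport_nonneg_nonzero hu_supp
      (fun x ↦ (hu_mem x).1) (x := p) (by simp [hu_one rfl])
  refine ⟨(∫ x, u x ∂μ)⁻¹ • u, fun x ↦ mul_nonneg (inv_nonneg.2 hpos.le) (hu_mem x).1,
    fun x hx ↦ ?_, ?_⟩
  · by_contra hxU
    exact hx (by simp [hu_zero fun h ↦ hxU (interior_subset h)])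
  · simp [integral_const_mul, hpos.ne']

/-- The iterated integral as a linear functional on `C(X × Y, 𝕜)`. It replaces integration against
`μ.prod ν`, since without second countability continuous functions on `X × Y` need not be measurable
for the product `σ`-algebra. -/
noncomputable def iteratedIntegral : C(X × Y, 𝕜) →ₗ[𝕜] 𝕜 where
  toFun F := ∫ x, ∫ y, F (x, y) ∂ν ∂μ
  map_add' F G := by
    have hslice (H : C(X × Y, 𝕜)) (x : X) : Integrable (fun y ↦ H (x, y)) ν :=
      integrable_of_continuous ν (by fun_prop)
    have houter (H : C(X × Y, 𝕜)) : Integrable (fun x ↦ ∫ y, H (x, y) ∂ν) μ :=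
      integrable_of_continuous μ (continuous_integral_right ν H.continuous)
    simp only [ContinuousMap.add_apply, integral_add (hslice F _) (hslice G _),
      integral_add (houter F) (houter G)]
  map_smul' c F := by
    simp only [ContinuousMap.smul_apply, integral_smul, RingHom.id_apply]

section KernelForm

/-- The sesquilinear form `∬ K(x, y) f(x) ḡ(y) dμ(y) dμ(x)` of the kernel `K` on continuous
densities. -/
noncomputable def kernelForm (K : C(X × X, 𝕜)) (f g : C(X, 𝕜)) : 𝕜 :=
  iteratedIntegral μ μ (K * f.comp .fst * star (g.comp .snd))

variable {K : C(X × X, 𝕜)}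

theorem kernelForm_sub_kernel (K L : C(X × X, 𝕜)) (f g : C(X, 𝕜)) :
    kernelForm μ (K - L) f g = kernelForm μ K f g - kernelForm μ L f g := by
  simp only [kernelForm, sub_mul, map_sub]

theorem kernelForm_const (c : 𝕜) (f g : C(X, 𝕜)) :
    kernelForm μ (.const _ c) f g = c * (∫ x, f x ∂μ) * conj (∫ x, g x ∂μ) := by
  change ∫ x, ∫ y, c * f x * conj (g y) ∂μ ∂μ = _
  simp only [integral_const_mul, integral_mul_const, integral_conj]

theorem kernelForm_sum_sum [Fintype ι] (K : C(X × X, 𝕜)) (f g : ι → C(X, 𝕜)) :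
    kernelForm μ K (∑ i, f i) (∑ j, g j) = ∑ i, ∑ j, kernelForm μ K (f i) (g j) := by
  simp only [kernelForm, ← map_sum]
  congr 1
  ext
  simp [mul_assoc, ← Finset.sum_mul, ← Finset.mul_sum]

theorem norm_kernelForm_le {ε : ℝ} {f g : C(X, 𝕜)}
    (hK : ∀ x y, f x ≠ 0 → g y ≠ 0 → ‖K (x, y)‖ ≤ ε) :
    ‖kernelForm μ K f g‖ ≤ ε * ((∫ x, ‖f x‖ ∂μ) * ∫ y, ‖g y‖ ∂μ) := by
  have hpointwise (x y : X) : ‖K (x, y) * f x * conj (g y)‖ ≤ ε * ‖f x‖ * ‖g y‖ := by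
    rw [norm_mul, norm_mul, RCLike.norm_conj]
    by_cases hx : f x = 0
    · simp [hx]
    by_cases hy : g y = 0
    · simp [hy]
    gcongr
    exact hK x y hx hy
  calc ‖kernelForm μ K f g‖
      ≤ ∫ x, ε * ‖f x‖ * ∫ y, ‖g y‖ ∂μ ∂μ := by
        refine norm_integral_le_of_norm_le (integrable_of_continuous μ (by fun_prop))
          (.of_forall fun x ↦ ?_)
        rw [← integral_const_mul]
        exact norm_integral_le_of_norm_le (integrable_of_continuous μ (by fun_prop))
          (.of_forall (hpointwise x))
    _ = ε * ((∫ x, ‖f x‖ ∂μ) * ∫ y, ‖g y‖ ∂μ) := by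
        rw [integral_mul_const, integral_const_mul, mul_assoc]

theorem norm_kernelForm_sub_const_mul_le {ε : ℝ} {c : 𝕜} {f g : C(X, 𝕜)}
    (hK : ∀ x y, f x ≠ 0 → g y ≠ 0 → dist (K (x, y)) c ≤ ε) :
    ‖kernelForm μ K f g - c * (∫ x, f x ∂μ) * conj (∫ y, g y ∂μ)‖ ≤
      ε * ((∫ x, ‖f x‖ ∂μ) * ∫ y, ‖g y‖ ∂μ) := by
  rw [← kernelForm_const, ← kernelForm_sub_kernel]
  exact norm_kernelForm_le μ (by simpa [dist_eq_norm] using hK)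

theorem norm_kernelForm_sum_sub_discreteForm_le [Fintype ι] {ε : ℝ} {p : ι → X} {f : ι → C(X, 𝕜)}
    (hK : ∀ i j x y, f i x ≠ 0 → f j y ≠ 0 → dist (K (x, y)) (K (p i, p j)) ≤ ε) :
    ‖kernelForm μ K (∑ i, f i) (∑ i, f i) - discreteForm K p fun i ↦ ∫ x, f i x ∂μ‖ ≤
      ε * (∑ i, ∫ x, ‖f i x‖ ∂μ) ^ 2 := by
  rw [kernelForm_sum_sum, discreteForm, sq, Finset.sum_mul_sum]
  simp only [← Finset.sum_sub_distrib, Finset.mul_sum]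
  exact norm_sum_le_of_le _ fun i _ ↦ norm_sum_le_of_le _ fun j _ ↦
    norm_kernelForm_sub_const_mul_le μ (hK i j)

end KernelForm

section Approximation

variable [R1Space X] (K : C(X × X, 𝕜)) {δ : ℝ}

theorem exists_dist_kernelForm_discreteForm_lt (f : C(X, 𝕜)) (hδ : 0 < δ) :
    ∃ (n : ℕ) (p : Fin n → X) (ξ : Fin n → 𝕜), ∑ i, ξ i = ∫ x, f x ∂μ ∧
      dist (kernelForm μ K f f) (discreteForm K p ξ) < δ := by
  obtain ⟨ε, hε, hεδ⟩ := exists_pos_mul_lt hδ ((∫ x, ‖f x‖ ∂μ) ^ 2)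
  obtain ⟨U, hU, hUK⟩ := exists_mem_nhds_forall_dist_lt K.continuous hε
  obtain ⟨n, p, ρ, hρU⟩ := exists_partitionOfUnity_isSubordinate_of_mem_nhds hU
  have hρ_sum (x : X) : ∑ i, ρ i x = 1 := by
    rw [← finsum_eq_sum_of_fintype, ρ.sum_eq_one (Set.mem_univ x)]
  let a (i : Fin n) : C(X, 𝕜) := ⟨fun x ↦ (ρ i x : 𝕜) * f x, by fun_prop⟩
  have ha_sum : ∑ i, a i = f := by
    ext x
    simp [a, ← Finset.sum_mul, ← RCLike.ofReal_sum, hρ_sum]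
  have ha_norm_sum : ∑ i, ∫ x, ‖a i x‖ ∂μ = ∫ x, ‖f x‖ ∂μ := by
    rw [← integral_finsetSum _ fun i _ ↦ integrable_of_continuous μ (by fun_prop)]
    simp [a, ← Finset.sum_mul, abs_of_nonneg (ρ.nonneg _ _), hρ_sum]
  have ha_mem {i : Fin n} {x : X} (hx : a i x ≠ 0) : x ∈ U (p i) :=
    hρU i (subset_tsupport _ fun h ↦ hx (by simp [a, h]))
  refine ⟨n, p, fun i ↦ ∫ x, a i x ∂μ, ?_, ?_⟩
  · rw [← integral_finsetSum _ fun i _ ↦ integrable_of_continuous μ (a i).continuous]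
    simp only [← ContinuousMap.sum_apply, ha_sum]
  · have hle := norm_kernelForm_sum_sub_discreteForm_le μ (K := K) (p := p) (f := a) (ε := ε)
      fun i j x y hx hy ↦ (hUK _ _ x (ha_mem hx) y (ha_mem hy)).le
    rw [ha_sum, ha_norm_sum, ← dist_eq_norm, mul_comm] at hle
    exact hle.trans_lt hεδ

theorem exists_dist_discreteForm_kernelForm_lt [μ.IsOpenPosMeasure] [Fintype ι] (p : ι → X)
    (ξ : ι → 𝕜) (hδ : 0 < δ) :
    ∃ f : C(X, 𝕜), ∫ x, f x ∂μ = ∑ i, ξ i ∧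
      dist (discreteForm K p ξ) (kernelForm μ K f f) < δ := by
  obtain ⟨ε, hε, hεδ⟩ := exists_pos_mul_lt hδ ((∑ i, ‖ξ i‖) ^ 2)
  obtain ⟨U, hU, hUK⟩ := exists_mem_nhds_forall_dist_lt K.continuous hε
  choose v hv_nonneg hv_supp hv_int using fun i ↦ exists_continuousMap_integral_eq_one μ (hU (p i))
  let a (i : ι) : C(X, 𝕜) := ⟨fun x ↦ ξ i * (v i x : 𝕜), by fun_prop⟩
  have ha_int (i : ι) : ∫ x, a i x ∂μ = ξ i := by
    simp [a, integral_const_mul, integral_ofReal, hv_int]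
  have ha_norm (i : ι) : ∫ x, ‖a i x‖ ∂μ = ‖ξ i‖ := by
    simp [a, abs_of_nonneg (hv_nonneg i _), integral_const_mul, hv_int]
  have ha_mem {i : ι} {x : X} (hx : a i x ≠ 0) : x ∈ U (p i) :=
    hv_supp i fun h ↦ hx (by simp [a, h])
  refine ⟨∑ i, a i, ?_, ?_⟩
  · simp only [ContinuousMap.sum_apply]
    rw [integral_finsetSum _ fun i _ ↦ integrable_of_continuous μ (a i).continuous]
    simp only [ha_int]
  · have hle := norm_kernelForm_sum_sub_discreteForm_le μ (K := K) (p := p) (f := a) (ε := ε)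
      fun i j x y hx hy ↦ (hUK _ _ x (ha_mem hx) y (ha_mem hy)).le
    simp only [ha_int, ha_norm] at hle
    rw [← dist_eq_norm, dist_comm, mul_comm] at hle
    exact hle.trans_lt hεδ

end Approximation

end RestrictedNegDef

open RestrictedNegDef in
theorem continuous_restricted_negdef_iff_integral_general {X 𝕜 : Type*} [RCLike 𝕜]
    [TopologicalSpace X] [CompactSpace X] [R1Space X] [MeasurableSpace X] [OpensMeasurableSpace X]
    (μ : Measure X) [IsFiniteMeasure μ] [μ.IsOpenPosMeasure] (K : C(X × X, 𝕜)) :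
    IsRestrictedNegDef K ↔
      ∀ f : C(X, 𝕜), ∫ x, f x ∂μ = 0 → RCLike.re (kernelForm μ K f f) ≤ 0 := by
  constructor
  · refine fun hK f hf ↦ re_nonpos_of_forall_exists_dist_lt fun δ hδ ↦ ?_
    obtain ⟨n, p, ξ, hξ, hlt⟩ := exists_dist_kernelForm_discreteForm_lt μ K f hδ
    exact ⟨_, hK n p ξ (hξ.trans hf), hlt⟩
  · refine fun hK n p ξ hξ ↦ re_nonpos_of_forall_exists_dist_lt fun δ hδ ↦ ?_
    obtain ⟨f, hf, hlt⟩ := exists_dist_discreteForm_kernelForm_lt μ K p ξ hδ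
    exact ⟨_, hK f (hf.trans hξ), hlt⟩

open Finset MeasureTheory in
/-- On a compact group `G` with normalized Haar probability measure `μ`, a continuous
function `φ` gives a restricted negative definite kernel `(g,h) ↦ φ(g h⁻¹)` iff
`Re ∬ φ(g h⁻¹) f(g) conj(f(h)) dμ dμ ≤ 0` for every continuous `f : G → ℂ` of mean zero. -/
theorem continuous_restricted_negdef_iff_integral
    {G : Type*} [Group G] [TopologicalSpace G] [IsTopologicalGroup G]
    [CompactSpace G] [T2Space G] [MeasurableSpace G] [BorelSpace G]
    (μ : Measure G) [μ.IsHaarMeasure] [IsProbabilityMeasure μ]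
    (φ : G → ℝ) (hφ : Continuous φ) :
    (∀ (n : ℕ) (g : Fin n → G) (ξ : Fin n → ℂ), (∑ i, ξ i) = 0 →
        (∑ i, ∑ j,
          ((φ (g i * (g j)⁻¹) : ℝ) : ℂ) * ξ i * (starRingEnd ℂ) (ξ j)).re ≤ 0) ↔
      (∀ f : C(G, ℂ), (∫ g, f g ∂μ) = 0 →
        (∫ g, ∫ h, ((φ (g * h⁻¹) : ℝ) : ℂ) * f g * (starRingEnd ℂ) (f h) ∂μ ∂μ).re ≤ 0) := by
  let K : C(G × G, ℂ) := ⟨fun p ↦ (φ (p.1 * p.2⁻¹) : ℂ), by fun_prop⟩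
  exact continuous_restricted_negdef_iff_integral_general μ K
end

section
/- Let SU(2) be the group of 2×2 complex special unitary matrices with normalized Haar probability measure μ, and define θ : SU(2) → [0,π] by θ(g) = arccos(Re(tr g)/2). Then the pushforward measure θ_*μ is absolutely continuous with respect to Lebesgue measure with density t ↦ (2/π) sin²(t) on [0,π]; equivalently, for every Borel set A ⊆ ℝ, μ({g : θ(g) ∈ A}) = ∫_{A ∩ [0,π]} (2/π) sin²(t) dt. -/
/-- `SU(2)` as found in Mathlib is only a submonoid of the matrices; we endow it with its
natural group structure (the inverse being the conjugate transpose). -/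
noncomputable instance : Group (Matrix.specialUnitaryGroup (Fin 2) ℂ) :=
  { (inferInstance : Monoid (Matrix.specialUnitaryGroup (Fin 2) ℂ)) with
    inv := fun g => ⟨star g.1, by
      rw [Matrix.mem_specialUnitaryGroup_iff]
      refine ⟨Unitary.star_mem g.2.1, ?_⟩
      have hdet : (g.1).det = 1 := g.2.2
      simp [Matrix.star_eq_conjTranspose, Matrix.det_conjTranspose, hdet]⟩
    inv_mul_cancel := fun g => by
      apply Subtype.ext
      exact (Unitary.mem_iff.mp g.2.1).1 }

/-- `SU(2)` is a topological group. -/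
instance : IsTopologicalGroup (Matrix.specialUnitaryGroup (Fin 2) ℂ) where
  continuous_mul := by
    apply Continuous.subtype_mk
    exact (continuous_mul.comp ((continuous_subtype_val.comp continuous_fst).prodMk
      (continuous_subtype_val.comp continuous_snd)))
  continuous_inv := by
    apply Continuous.subtype_mk
    exact continuous_star.comp continuous_subtype_val

/-!
The first column identifies `SU(2)` with the unit sphere of `ℂ²`, in such a way that left
multiplication by `g` becomes the action of `g` on the sphere, a linear isometry. Surface measure is
therefore carried to a left invariant measure, that is, to a multiple of Haar measure. A matrix in
`SU(2)` with first column `v` has trace `2 Re v₀`, so `θ` becomes the angle between `v` and the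
first basis vector. In a Euclidean space of dimension `n`, writing the space as a line plus its
orthogonal complement and using polar coordinates twice shows that the angle to a fixed unit vector
has density proportional to `sin ^ (n - 2)` under surface measure; here `n = 4`, and
`∫ sin ^ 2 = π / 2` over `[0, π]` fixes the constant.
-/

section

open Matrix MeasureTheory Measure Module Metric Set Real InnerProductGeometry
open scoped ENNReal Pointwise RealInnerProductSpace

theorem ofReal_setIntegral_inter_Icc {f : ℝ → ℝ} (hf : Continuous f) (hf₀ : 0 ≤ f) (A : Set ℝ)
    (a b : ℝ) :
    ENNReal.ofReal (∫ t in A ∩ Icc a b, f t) = ∫⁻ t in A ∩ Icc a b, ENNReal.ofReal (f t) :=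
  ofReal_integral_eq_lintegral_ofReal (hf.integrableOn_Icc.mono_set inter_subset_right)
    (.of_forall hf₀)

theorem natCast_mul_setLIntegral_Ioo_pow {n : ℕ} (hn : n ≠ 0) :
    n * ∫⁻ r in Ioo (0 : ℝ) 1, ENNReal.ofReal (r ^ (n - 1)) = 1 := by
  obtain ⟨n, rfl⟩ := Nat.exists_eq_succ_of_ne_zero hn
  rw [← ofReal_integral_eq_lintegral_ofReal, ← integral_Ioc_eq_integral_Ioo,
    ← intervalIntegral.integral_of_le zero_le_one, integral_pow, ← ENNReal.ofReal_natCast,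
    ← ENNReal.ofReal_mul (by positivity)]
  · simp [field]
  · exact (continuous_pow n).integrableOn_Icc.mono_set Ioo_subset_Icc_self
  · exact ae_restrict_of_forall_mem measurableSet_Ioo fun r hr ↦ pow_nonneg hr.1.le n

theorem setLIntegral_upperHalfPlane_eq_polar {f : ℝ × ℝ → ℝ≥0∞} (hf : Measurable f) :
    ∫⁻ p in univ ×ˢ Ioi 0, f p =
      ∫⁻ θ in Ioo 0 π, ∫⁻ r in Ioi 0, ENNReal.ofReal r * f (r * cos θ, r * sin θ) := by
  have hpre : polarCoord.symm ⁻¹' (univ ×ˢ Ioi 0) ∩ polarCoord.target = Ioi 0 ×ˢ Ioo 0 π := by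
    ext ⟨r, θ⟩
    simp only [polarCoord_target, polarCoord_symm_apply, mem_inter_iff, mem_preimage, mem_prod,
      mem_univ, mem_Ioi, mem_Ioo, true_and]
    constructor
    · rintro ⟨hsin, hr, hθ, hθ'⟩
      refine ⟨hr, ?_, hθ'⟩
      contrapose! hsin
      exact mul_nonpos_of_nonneg_of_nonpos hr.le (sin_nonpos_of_nonpos_of_neg_pi_le hsin hθ.le)
    · rintro ⟨hr, hθ, hθ'⟩
      exact ⟨mul_pos hr (sin_pos_of_pos_of_lt_pi hθ hθ'), hr, by linarith [pi_pos], hθ'⟩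
  have hmeas : MeasurableSet (polarCoord.symm ⁻¹' (univ ×ˢ Ioi (0 : ℝ))) :=
    continuous_polarCoord_symm.measurable (MeasurableSet.univ.prod measurableSet_Ioi)
  calc
    ∫⁻ p in univ ×ˢ Ioi 0, f p
        = ∫⁻ p in polarCoord.target, (polarCoord.symm ⁻¹' (univ ×ˢ Ioi 0)).indicator
            (fun p ↦ ENNReal.ofReal p.1 * f (polarCoord.symm p)) p := by
      rw [← lintegral_indicator (MeasurableSet.univ.prod measurableSet_Ioi),
        ← lintegral_comp_polarCoord_symm]
      simp [indicator]
    _ = ∫⁻ p in Ioi 0 ×ˢ Ioo 0 π, ENNReal.ofReal p.1 * f (polarCoord.symm p) := by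
      rw [lintegral_indicator hmeas, restrict_restrict hmeas, hpre]
    _ = _ := by
      rw [volume_eq_prod, ← prod_restrict, lintegral_prod_symm']
      · simp
      · exact (by fun_prop : Measurable fun p : ℝ × ℝ ↦ ENNReal.ofReal p.1).mul
          (hf.comp continuous_polarCoord_symm.measurable)

theorem lintegral_norm_eq_toSphere_mul {E : Type*} [NormedAddCommGroup E] [NormedSpace ℝ E]
    [MeasurableSpace E] [BorelSpace E] [FiniteDimensional ℝ E] [Nontrivial E] (μ : Measure E)
    [μ.IsAddHaarMeasure] {f : ℝ → ℝ≥0∞} (hf : Measurable f) :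
    ∫⁻ x, f ‖x‖ ∂μ =
      μ.toSphere univ * ∫⁻ r in Ioi 0, ENNReal.ofReal (r ^ (finrank ℝ E - 1)) * f r := by
  calc
    ∫⁻ x, f ‖x‖ ∂μ = ∫⁻ x : ({0}ᶜ : Set E), f ‖x.1‖ ∂(μ.comap (↑)) := by
      rw [lintegral_subtype_comap (measurableSet_singleton _).compl fun x ↦ f ‖x‖,
        restrict_compl_singleton]
    _ = ∫⁻ p, f p.2 ∂μ.toSphere.prod (.volumeIoiPow (finrank ℝ E - 1)) := by
      simpa using μ.measurePreserving_homeomorphUnitSphereProd.lintegral_comp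
        (f := fun p ↦ f p.2) (by fun_prop)
    _ = μ.toSphere univ * ∫⁻ r : Ioi (0 : ℝ), f r ∂.volumeIoiPow (finrank ℝ E - 1) := by
      rw [lintegral_prod _ (by fun_prop)]
      simp only [lintegral_const, mul_comm]
    _ = _ := by
      rw [volumeIoiPow, lintegral_withDensity_eq_lintegral_mul _ (by fun_prop) (by fun_prop)]
      exact congrArg _ (lintegral_subtype_comap measurableSet_Ioi
        fun r ↦ ENNReal.ofReal (r ^ (finrank ℝ E - 1)) * f r)

theorem measurePreserving_toSphere {E F : Type*} [NormedAddCommGroup E] [NormedSpace ℝ E]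
    [MeasurableSpace E] [BorelSpace E] [NormedAddCommGroup F] [NormedSpace ℝ F]
    [MeasurableSpace F] [BorelSpace F] {μ : Measure E} {ν : Measure F} (T : E ≃ₗᵢ[ℝ] F)
    (hT : MeasurePreserving T μ ν) :
    MeasurePreserving (fun v : sphere (0 : E) 1 ↦ (⟨T v, by simp⟩ : sphere (0 : F) 1))
      μ.toSphere ν.toSphere := by
  have hmeas : Measurable fun v : sphere (0 : E) 1 ↦ (⟨T v, by simp⟩ : sphere (0 : F) 1) :=
    (T.continuous.comp continuous_subtype_val).subtype_mk _ |>.measurable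
  refine ⟨hmeas, ?_⟩
  ext s hs
  have h_cone : Ioo (0 : ℝ) 1 • ((↑) '' ((fun v : sphere (0 : E) 1 ↦
      (⟨T v, by simp⟩ : sphere (0 : F) 1)) ⁻¹' s)) = T ⁻¹' (Ioo (0 : ℝ) 1 • ((↑) '' s)) := by
    ext x
    constructor
    · rintro ⟨r, hr, -, ⟨v, hv, rfl⟩, rfl⟩
      exact ⟨r, hr, T v, ⟨_, hv, rfl⟩, (map_smul T r v.1).symm⟩
    · rintro ⟨r, hr, -, ⟨w, hw, rfl⟩, hx⟩
      refine ⟨r, hr, T.symm w, ⟨⟨T.symm w, by simp⟩, by simpa using hw, rfl⟩, T.injective ?_⟩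
      simpa using hx
  rw [map_apply hmeas hs, toSphere_apply' _ (hmeas hs), toSphere_apply' _ hs, h_cone,
    hT.measure_preimage_emb T.toHomeomorph.measurableEmbedding, T.toLinearEquiv.finrank_eq]

section Colatitude

variable {E : Type*} [NormedAddCommGroup E] [InnerProductSpace ℝ E]

theorem toSpanUnitSingleton_symm_orthogonalProjectionOnto {u : E} (hu : ‖u‖ = 1) (x : E) :
    (LinearIsometryEquiv.toSpanUnitSingleton u hu).symm ((ℝ ∙ u).orthogonalProjectionOnto x) =
      ⟪u, x⟫ := by
  rw [LinearIsometryEquiv.symm_apply_eq, Subtype.ext_iff]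
  simp [Submodule.starProjection_unit_singleton, hu]

theorem norm_sq_eq_inner_sq_add_norm_sq {u : E} (hu : ‖u‖ = 1) (x : E) :
    ‖x‖ ^ 2 = ⟪u, x⟫ ^ 2 + ‖(ℝ ∙ u)ᗮ.orthogonalProjectionOnto x‖ ^ 2 := by
  rw [Submodule.norm_sq_eq_add_norm_sq_projection x (ℝ ∙ u),
    ← toSpanUnitSingleton_symm_orthogonalProjectionOnto hu x,
    ← sq_abs (LinearIsometryEquiv.symm _ _), ← Real.norm_eq_abs, LinearIsometryEquiv.norm_map]

theorem Ioo_smul_image_setOf_angle_mem (u : E) (A : Set ℝ) :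
    Ioo (0 : ℝ) 1 • ((↑) '' {v : sphere (0 : E) 1 | angle u v ∈ A}) =
      {x | ‖x‖ ∈ Ioo 0 1 ∧ angle u x ∈ A} := by
  ext x
  constructor
  · rintro ⟨r, hr, -, ⟨v, hv, rfl⟩, rfl⟩
    rw [mem_ofPred_eq] at hv ⊢
    simp [norm_smul, abs_of_pos hr.1, angle_smul_right_of_pos, hr.1, hr.2, hv]
  · rintro ⟨hx, hA⟩
    refine ⟨‖x‖, hx, ‖x‖⁻¹ • x, ⟨⟨‖x‖⁻¹ • x, ?_⟩, ?_, rfl⟩, ?_⟩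
    · simp [norm_smul, hx.1.ne']
    · simpa [angle_smul_right_of_pos, hx.1] using hA
    · simp [smul_smul, hx.1.ne']

variable [MeasurableSpace E] [BorelSpace E] [FiniteDimensional ℝ E]

theorem volume_preserving_inner_orthogonalProjectionOnto {u : E} (hu : ‖u‖ = 1) :
    MeasurePreserving (fun x : E ↦ (⟪u, x⟫, (ℝ ∙ u)ᗮ.orthogonalProjectionOnto x)) := by
  have h := (((LinearIsometryEquiv.toSpanUnitSingleton (𝕜 := ℝ) u hu).symm.measurePreserving).prod
    (.id _)).comp ((WithLp.volume_preserving_ofLp _ _).comp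
      (ℝ ∙ u).orthogonalDecomposition.measurePreserving)
  convert! h using 1
  ext x : 1
  simp [toSpanUnitSingleton_symm_orthogonalProjectionOnto]

theorem lintegral_inner_norm_orthogonalProjectionOnto (hE : 2 ≤ finrank ℝ E) {u : E}
    (hu : ‖u‖ = 1) {f : ℝ × ℝ → ℝ≥0∞} (hf : Measurable f) :
    ∫⁻ x, f (⟪u, x⟫, ‖(ℝ ∙ u)ᗮ.orthogonalProjectionOnto x‖) =
      (volume : Measure (ℝ ∙ u)ᗮ).toSphere univ * ∫⁻ θ in Ioo 0 π, ∫⁻ r in Ioi 0,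
        ENNReal.ofReal (r ^ (finrank ℝ E - 1) * sin θ ^ (finrank ℝ E - 2)) *
          f (r * cos θ, r * sin θ) := by
  obtain ⟨d, hd⟩ := Nat.exists_eq_add_of_le' hE
  have hdim : finrank ℝ (ℝ ∙ u)ᗮ = d + 1 := by
    have : Fact (finrank ℝ E = d + 1 + 1) := ⟨hd⟩
    exact Submodule.finrank_orthogonal_span_singleton (norm_ne_zero_iff.mp (by simp [hu]))
  have : Nontrivial (ℝ ∙ u)ᗮ := nontrivial_of_finrank_pos (R := ℝ) (by omega)
  set c := (volume : Measure (ℝ ∙ u)ᗮ).toSphere univ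
  calc
    ∫⁻ x, f (⟪u, x⟫, ‖(ℝ ∙ u)ᗮ.orthogonalProjectionOnto x‖)
        = ∫⁻ s, ∫⁻ y : (ℝ ∙ u)ᗮ, f (s, ‖y‖) := by
      rw [(volume_preserving_inner_orthogonalProjectionOnto hu).lintegral_comp
        (f := fun p ↦ f (p.1, ‖p.2‖)) (by fun_prop), volume_eq_prod,
        lintegral_prod _ (by fun_prop)]
    _ = ∫⁻ s, c * ∫⁻ ρ in Ioi 0, ENNReal.ofReal (ρ ^ d) * f (s, ρ) := by
      congr with s
      rw [lintegral_norm_eq_toSphere_mul _ (by fun_prop : Measurable fun ρ ↦ f (s, ρ)), hdim,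
        Nat.add_sub_cancel]
    _ = c * ∫⁻ p in univ ×ˢ Ioi 0, ENNReal.ofReal (p.2 ^ d) * f p := by
      rw [lintegral_const_mul _ (by fun_prop), volume_eq_prod, ← prod_restrict, restrict_univ,
        lintegral_prod _ (by fun_prop)]
    _ = _ := by
      rw [setLIntegral_upperHalfPlane_eq_polar (by fun_prop), hd]
      congr! 1
      refine setLIntegral_congr_fun measurableSet_Ioo fun θ _ ↦
        setLIntegral_congr_fun measurableSet_Ioi fun r (hr : 0 < r) ↦ ?_
      simp only [← mul_assoc, ← ENNReal.ofReal_mul hr.le]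
      congr 2
      simp only [Nat.add_sub_cancel, Nat.add_succ_sub_one]
      ring

theorem lintegral_norm_angle (hE : 2 ≤ finrank ℝ E) {u : E} (hu : ‖u‖ = 1)
    {f : ℝ × ℝ → ℝ≥0∞} (hf : Measurable f) :
    ∫⁻ x, f (‖x‖, angle u x) =
      (volume : Measure (ℝ ∙ u)ᗮ).toSphere univ * ∫⁻ θ in Ioo 0 π, ∫⁻ r in Ioi 0,
        ENNReal.ofReal (r ^ (finrank ℝ E - 1) * sin θ ^ (finrank ℝ E - 2)) * f (r, θ) := by
  let F : ℝ × ℝ → ℝ × ℝ := fun p ↦ (√(p.1 ^ 2 + p.2 ^ 2), arccos (p.1 / √(p.1 ^ 2 + p.2 ^ 2)))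
  have hF_coord (x : E) :
      F (⟪u, x⟫, ‖(ℝ ∙ u)ᗮ.orthogonalProjectionOnto x‖) = (‖x‖, angle u x) := by
    simp only [F, ← norm_sq_eq_inner_sq_add_norm_sq hu, sqrt_sq (norm_nonneg _), angle, hu, one_mul]
  have hF_polar {θ : ℝ} (hθ : θ ∈ Ioo 0 π) {r : ℝ} (hr : 0 < r) :
      F (r * cos θ, r * sin θ) = (r, θ) := by
    have : √((r * cos θ) ^ 2 + (r * sin θ) ^ 2) = r := by
      rw [mul_pow, mul_pow, ← mul_add, cos_sq_add_sin_sq, mul_one, sqrt_sq hr.le]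
    simp only [F, this, mul_div_cancel_left₀ _ hr.ne', arccos_cos hθ.1.le hθ.2.le]
  have hF : Measurable F := by fun_prop
  have h := lintegral_inner_norm_orthogonalProjectionOnto hE hu (hf.comp hF)
  simp only [Function.comp_apply, hF_coord] at h
  rw [h]
  congr 1
  refine setLIntegral_congr_fun measurableSet_Ioo fun θ hθ ↦
    setLIntegral_congr_fun measurableSet_Ioi fun r hr ↦ ?_
  rw [hF_polar hθ hr]

theorem finrank_mul_volume_setOf_norm_mem_Ioo_angle_mem (hE : 2 ≤ finrank ℝ E) {u : E}
    (hu : ‖u‖ = 1) {A : Set ℝ} (hA : MeasurableSet A) :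
    finrank ℝ E * volume {x : E | ‖x‖ ∈ Ioo 0 1 ∧ angle u x ∈ A} =
      (volume : Measure (ℝ ∙ u)ᗮ).toSphere univ *
        ∫⁻ θ in A ∩ Ioo 0 π, ENNReal.ofReal (sin θ ^ (finrank ℝ E - 2)) := by
  set n := finrank ℝ E
  set c := (volume : Measure (ℝ ∙ u)ᗮ).toSphere univ
  have hS : MeasurableSet (Ioo (0 : ℝ) 1 ×ˢ A) := measurableSet_Ioo.prod hA
  have h_polar : Measurable fun x : E ↦ (‖x‖, angle u x) := by
    unfold angle
    fun_prop
  calc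
    n * volume {x : E | ‖x‖ ∈ Ioo 0 1 ∧ angle u x ∈ A}
        = n * ∫⁻ x, (Ioo 0 1 ×ˢ A).indicator 1 (‖x‖, angle u x) :=
      congrArg _ (lintegral_indicator_one (h_polar hS)).symm
    _ = c * (n * ∫⁻ θ in Ioo 0 π, ∫⁻ r in Ioi 0,
          A.indicator (fun θ ↦ ENNReal.ofReal (sin θ ^ (n - 2))) θ *
            (Ioo 0 1).indicator (fun r ↦ ENNReal.ofReal (r ^ (n - 1))) r) := by
      classical
      rw [lintegral_norm_angle hE hu (measurable_one.indicator hS), mul_left_comm]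
      congr 2
      refine lintegral_congr fun θ ↦
        setLIntegral_congr_fun measurableSet_Ioi fun r (hr : 0 < r) ↦ ?_
      simp only [indicator_apply, mem_prod, ENNReal.ofReal_mul (pow_nonneg hr.le _), n]
      split_ifs <;> simp_all [mul_comm]
    _ = c * ((∫⁻ θ in A ∩ Ioo 0 π, ENNReal.ofReal (sin θ ^ (n - 2))) *
          (n * ∫⁻ r in Ioo (0 : ℝ) 1, ENNReal.ofReal (r ^ (n - 1)))) := by
      rw [lintegral_lintegral_mul (by measurability) (by measurability),
        setLIntegral_indicator measurableSet_Ioo, setLIntegral_indicator hA,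
        inter_eq_left.mpr Ioo_subset_Ioi_self, mul_left_comm (n : ℝ≥0∞)]
    _ = _ := by
      rw [natCast_mul_setLIntegral_Ioo_pow (by lia), mul_one]

theorem toSphere_setOf_angle_mem (hE : 2 ≤ finrank ℝ E) {u : E} (hu : ‖u‖ = 1) {A : Set ℝ}
    (hA : MeasurableSet A) :
    (volume : Measure E).toSphere {v | angle u v ∈ A} =
      (volume : Measure (ℝ ∙ u)ᗮ).toSphere univ *
        ∫⁻ θ in A ∩ Icc 0 π, ENNReal.ofReal (sin θ ^ (finrank ℝ E - 2)) := by
  have h_angle : Measurable fun v : sphere (0 : E) 1 ↦ angle u v := by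
    unfold angle
    fun_prop
  have h_set : MeasurableSet {v : sphere (0 : E) 1 | angle u v ∈ A} := h_angle hA
  rw [toSphere_apply' _ h_set, Ioo_smul_image_setOf_angle_mem,
    finrank_mul_volume_setOf_norm_mem_Ioo_angle_mem hE hu hA,
    restrict_congr_set ((ae_eq_refl A).inter Ioo_ae_eq_Icc)]

theorem toSphere_setOf_angle_mem_mul (hE : 2 ≤ finrank ℝ E) {u : E} (hu : ‖u‖ = 1) {A : Set ℝ}
    (hA : MeasurableSet A) :
    (volume : Measure E).toSphere {v | angle u v ∈ A} *
        ∫⁻ θ in Icc 0 π, ENNReal.ofReal (sin θ ^ (finrank ℝ E - 2)) =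
      (volume : Measure E).toSphere univ *
        ∫⁻ θ in A ∩ Icc 0 π, ENNReal.ofReal (sin θ ^ (finrank ℝ E - 2)) := by
  have h_univ := toSphere_setOf_angle_mem hE hu MeasurableSet.univ
  simp only [mem_univ, ofPred_true, univ_inter] at h_univ
  rw [toSphere_setOf_angle_mem hE hu hA, h_univ, mul_right_comm]

end Colatitude

theorem map_eq_measure_univ_smul_haar {G X : Type*} [Group G] [TopologicalSpace G]
    [IsTopologicalGroup G] [CompactSpace G] [MeasurableSpace G] [BorelSpace G]
    (μ : Measure G) [μ.IsHaarMeasure] [IsProbabilityMeasure μ]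
    [MeasurableSpace X] (ν : Measure X) [IsFiniteMeasure ν] {T : G → X → X}
    (hT : ∀ g, MeasurePreserving (T g) ν ν) {Φ : X → G} (hΦ : Measurable Φ)
    (hΦT : ∀ g, Function.Semiconj Φ (T g) (g * ·)) :
    ν.map Φ = ν univ • μ := by
  have : (ν.map Φ).IsMulLeftInvariant := ⟨fun g ↦
    ((hΦ.measurePreserving ν).of_semiconj (hT g) (hΦT g) (measurable_const_mul g)).map_eq⟩
  have h := isMulInvariant_eq_smul_of_compactSpace (ν.map Φ) μ
  generalize haarScalarFactor (ν.map Φ) μ = c at h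
  have h_univ : ν univ = c := by
    simpa [h] using (map_apply (μ := ν) hΦ .univ).symm
  rw [h, h_univ, ENNReal.smul_def]

theorem mem_specialUnitaryGroup_fin_two_iff {R : Type*} [CommRing R] [StarRing R]
    {M : Matrix (Fin 2) (Fin 2) R} :
    M ∈ specialUnitaryGroup (Fin 2) R ↔
      M 0 1 = -star (M 1 0) ∧ M 1 1 = star (M 0 0) ∧
        star (M 0 0) * M 0 0 + star (M 1 0) * M 1 0 = 1 := by
  constructor
  · rintro ⟨⟨h_star, -⟩, h_det : M.det = 1⟩
    have h_adj : star M = M.adjugate :=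
      left_inv_eq_right_inv h_star (by rw [mul_adjugate, h_det, one_smul])
    rw [star_eq_conjTranspose, adjugate_fin_two] at h_adj
    have h₀₀ : star (M 0 0) = M 1 1 := congrFun₂ h_adj 0 0
    have h₀₁ : star (M 1 0) = -M 0 1 := congrFun₂ h_adj 0 1
    refine ⟨by rw [h₀₁, neg_neg], h₀₀.symm, ?_⟩
    rw [h₀₀, h₀₁, ← h_det, det_fin_two]
    ring
  · rintro ⟨h₀₁, h₁₁, h_norm⟩
    rw [mem_specialUnitaryGroup_iff, mem_unitaryGroup_iff', star_eq_conjTranspose, det_fin_two]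
    refine ⟨?_, by linear_combination h₁₁ * M 0 0 - h₀₁ * M 1 0 + h_norm⟩
    simp only [← Matrix.ext_iff, Fin.forall_fin_two, Matrix.mul_apply, Fin.sum_univ_two,
      conjTranspose_apply, one_apply_eq, one_apply_ne zero_ne_one, one_apply_ne one_ne_zero, h₀₁,
      h₁₁, star_neg, star_star]
    exact ⟨⟨h_norm, by ring⟩, by ring, by linear_combination h_norm⟩

theorem specialUnitaryGroup_fin_two_ext {R : Type*} [CommRing R] [StarRing R]
    {g h : specialUnitaryGroup (Fin 2) R} (hgh : ∀ i, g.1 i 0 = h.1 i 0) : g = h := by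
  obtain ⟨hg₀₁, hg₁₁, -⟩ := mem_specialUnitaryGroup_fin_two_iff.mp g.2
  obtain ⟨hh₀₁, hh₁₁, -⟩ := mem_specialUnitaryGroup_fin_two_iff.mp h.2
  ext i j
  fin_cases j
  · exact hgh i
  · fin_cases i <;> simp [*]

/-- The action of a unitary matrix on `ℂⁿ`, as an isometry of the underlying real inner product
space. -/
noncomputable def unitaryIsometry {n : Type*} [Fintype n] [DecidableEq n] (U : unitaryGroup n ℂ) :
    EuclideanSpace ℂ n ≃ₗᵢ[ℝ] EuclideanSpace ℂ n :=
  let T := Unitary.linearIsometryEquiv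
    ⟨toEuclideanCLM (𝕜 := ℂ) U.1, Unitary.map_mem toEuclideanCLM U.2⟩
  ⟨T.toLinearEquiv.restrictScalars ℝ, T.norm_map⟩

theorem unitaryIsometry_apply {n : Type*} [Fintype n] [DecidableEq n] (U : unitaryGroup n ℂ)
    (x : EuclideanSpace ℂ n) : unitaryIsometry U x = WithLp.toLp 2 (U.1 *ᵥ x.ofLp) :=
  rfl

local notation "SU₂" => specialUnitaryGroup (Fin 2) ℂ
local notation "ℂ²" => EuclideanSpace ℂ (Fin 2)

/-- The identification of the unit sphere of `ℂ²` with `SU(2)`, sending `v` to the matrix with first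
column `v`. -/
noncomputable def sphereToSU2 (v : sphere (0 : ℂ²) 1) : SU₂ :=
  ⟨!![v.1 0, -star (v.1 1); v.1 1, star (v.1 0)], by
    have hv : ‖v.1‖ ^ 2 = 1 := by simp
    rw [EuclideanSpace.norm_sq_eq, Fin.sum_univ_two] at hv
    exact mem_specialUnitaryGroup_fin_two_iff.mpr
      ⟨rfl, rfl, by simpa [Complex.conj_mul'] using mod_cast hv⟩⟩

theorem sphereToSU2_apply_zero (v : sphere (0 : ℂ²) 1) (i : Fin 2) :
    (sphereToSU2 v).1 i 0 = v.1 i := by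
  fin_cases i <;> rfl

theorem continuous_sphereToSU2 : Continuous sphereToSU2 := by
  refine Continuous.subtype_mk (continuous_matrix fun i j ↦ ?_) _
  fin_cases i <;> fin_cases j <;> dsimp <;> fun_prop

theorem surjective_sphereToSU2 : Function.Surjective sphereToSU2 := by
  intro g
  obtain ⟨-, -, hg⟩ := mem_specialUnitaryGroup_fin_two_iff.mp g.2
  refine ⟨⟨WithLp.toLp 2 fun i ↦ g.1 i 0, ?_⟩, specialUnitaryGroup_fin_two_ext fun i ↦ ?_⟩
  · simp only [Complex.star_def, Complex.conj_mul'] at hg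
    simpa [EuclideanSpace.norm_eq, Fin.sum_univ_two] using mod_cast hg
  · rw [sphereToSU2_apply_zero]

theorem arccos_trace_sphereToSU2 (v : sphere (0 : ℂ²) 1) :
    arccos ((sphereToSU2 v).1.trace.re / 2) = angle (EuclideanSpace.single 0 1) v.1 := by
  simp [angle, sphereToSU2, trace_fin_two, PiLp.inner_apply]

theorem sphereToSU2_unitaryIsometry (g : SU₂) (v : sphere (0 : ℂ²) 1) :
    sphereToSU2
        ⟨unitaryIsometry (Submonoid.inclusion specialUnitaryGroup_le_unitaryGroup g) v, by simp⟩ =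
      g * sphereToSU2 v := by
  refine specialUnitaryGroup_fin_two_ext fun i ↦ ?_
  simp only [sphereToSU2_apply_zero, unitaryIsometry_apply, mulVec, dotProduct, Submonoid.coe_mul,
    Submonoid.coe_inclusion, Matrix.mul_apply]

theorem map_sphereToSU2_toSphere [MeasurableSpace SU₂] [BorelSpace SU₂] (μ : Measure SU₂)
    [μ.IsHaarMeasure] [IsProbabilityMeasure μ] :
    Measure.map sphereToSU2 (volume : Measure ℂ²).toSphere =
      (volume : Measure ℂ²).toSphere univ • μ := by
  have : CompactSpace SU₂ := surjective_sphereToSU2.compactSpace continuous_sphereToSU2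
  exact map_eq_measure_univ_smul_haar μ _
    (fun g ↦ measurePreserving_toSphere
      (unitaryIsometry (Submonoid.inclusion specialUnitaryGroup_le_unitaryGroup g))
      (LinearIsometryEquiv.measurePreserving _))
    continuous_sphereToSU2.measurable sphereToSU2_unitaryIsometry

theorem measure_setOf_arccos_trace_mem_mul [MeasurableSpace SU₂] [BorelSpace SU₂] (μ : Measure SU₂)
    [μ.IsHaarMeasure] [IsProbabilityMeasure μ] {A : Set ℝ} (hA : MeasurableSet A) :
    μ {g | arccos (g.1.trace.re / 2) ∈ A} * ∫⁻ t in Icc 0 π, ENNReal.ofReal (sin t ^ 2) =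
      ∫⁻ t in A ∩ Icc 0 π, ENNReal.ofReal (sin t ^ 2) := by
  set ν := (volume : Measure ℂ²).toSphere
  have h_dim : finrank ℝ ℂ² = 4 := by
    rw [← finrank_mul_finrank ℝ ℂ]
    simp
  have h_meas : Measurable fun g : SU₂ ↦ arccos (g.1.trace.re / 2) :=
    Continuous.measurable (by unfold trace; fun_prop)
  have h_set : MeasurableSet {g : SU₂ | arccos (g.1.trace.re / 2) ∈ A} := h_meas hA
  have h_map : ν univ * μ {g | arccos (g.1.trace.re / 2) ∈ A} =
      ν {v | angle (EuclideanSpace.single 0 1) v.1 ∈ A} := by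
    rw [← smul_eq_mul, ← Measure.smul_apply, ← map_sphereToSU2_toSphere μ,
      map_apply continuous_sphereToSU2.measurable h_set]
    simp only [preimage_ofPred_eq, arccos_trace_sphereToSU2]
    rfl
  have h_law := toSphere_setOf_angle_mem_mul (E := ℂ²) (by simp [h_dim])
    (u := EuclideanSpace.single 0 1) (by simp) hA
  rw [← h_map, h_dim, mul_assoc] at h_law
  have h_ne_zero : ν univ ≠ 0 := measure_univ_eq_zero.not.mpr (toSphere_ne_zero _)
  exact (ENNReal.mul_right_inj h_ne_zero (measure_ne_top _ _)).mp h_law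

theorem ofReal_two_div_pi_mul_lintegral_sin_sq :
    ENNReal.ofReal (2 / π) * ∫⁻ t in Icc 0 π, ENNReal.ofReal (sin t ^ 2) = 1 := by
  rw [← univ_inter (Icc 0 π), ← ofReal_setIntegral_inter_Icc
    (f := fun t ↦ sin t ^ 2) (by fun_prop) (fun t ↦ sq_nonneg _), univ_inter,
    integral_Icc_eq_integral_Ioc, ← intervalIntegral.integral_of_le pi_pos.le, integral_sin_sq,
    ← ENNReal.ofReal_mul (by positivity)]
  simp [pi_ne_zero]

end

open MeasureTheory Real in
/-- Under the normalized Haar measure of `SU(2)`, the random variable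
`θ(g) = arccos(Re(tr g)/2)` has density `t ↦ (2/π) sin² t` on `[0, π]`. -/
theorem haar_SU2_angle_density
    [MeasurableSpace (Matrix.specialUnitaryGroup (Fin 2) ℂ)]
    [BorelSpace (Matrix.specialUnitaryGroup (Fin 2) ℂ)]
    (μ : Measure (Matrix.specialUnitaryGroup (Fin 2) ℂ))
    [μ.IsHaarMeasure] [IsProbabilityMeasure μ] (A : Set ℝ) (hA : MeasurableSet A) :
    μ {g : Matrix.specialUnitaryGroup (Fin 2) ℂ |
        arccos ((Matrix.trace ((g : Matrix (Fin 2) (Fin 2) ℂ))).re / 2) ∈ A} =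
      ENNReal.ofReal (∫ t in A ∩ Set.Icc 0 π, (2 / π) * sin t ^ 2) := by
  rw [integral_const_mul, ENNReal.ofReal_mul (by positivity),
    ofReal_setIntegral_inter_Icc (f := fun t ↦ sin t ^ 2) (by fun_prop) (fun t ↦ sq_nonneg _),
    ← measure_setOf_arccos_trace_mem_mul μ hA, mul_left_comm,
    ofReal_two_div_pi_mul_lintegral_sin_sq, mul_one]
end

section
/- Let SO(3) be the group of 3×3 real special orthogonal matrices with normalized Haar probability measure μ. Then the pushforward of μ under the trace map g ↦ tr(g) is absolutely continuous with respect to Lebesgue measure with density y ↦ (1/(2π)) (3−y)^{1/2} (y+1)^{−1/2} on [−1,3]; equivalently, for every Borel set A ⊆ ℝ, μ({g : tr(g) ∈ A}) = ∫_{A ∩ [−1,3]} (1/(2π)) √(3−y)/√(y+1) dy. -/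
/-!
The unit quaternions are the sphere `S³`, and `v ↦ u * v * star u` on imaginary quaternions defines
a continuous surjective homomorphism from `S³` onto `SO(3)`, so the Haar measure of `SO(3)` is the
image of the normalized surface measure of `S³`. The rotation attached to `u` has trace
`4 * u.re ^ 2 - 1`. Write a quaternion as a point of `ℝ ⊕ ℝ³` and let `t` be its slope, the quotient
of the norms of the two components: on `S³` one has `u.re ^ 2 = (1 + t ^ 2)⁻¹`, and polar
coordinates in both summands show that `t` has density proportional to `t ^ 2 / (1 + t ^ 2) ^ 2`
on `(0, ∞)`. The substitution `y = 4 / (1 + t ^ 2) - 1`, for which `t = √(3 - y) / √(y + 1)`,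
gives the density of the trace.
-/

/-- `SO(n)` as found in Mathlib is only a submonoid of the matrices; we endow it with its
natural group structure (the inverse being the transpose). -/
noncomputable instance instGroupSO (n : ℕ) : Group (Matrix.specialOrthogonalGroup (Fin n) ℝ) :=
  { (inferInstance : Monoid (Matrix.specialOrthogonalGroup (Fin n) ℝ)) with
    inv := fun g => ⟨star g.1, by
      rw [Matrix.mem_specialUnitaryGroup_iff]
      refine ⟨Unitary.star_mem g.2.1, ?_⟩
      have hdet : (g.1).det = 1 := g.2.2
      simp [Matrix.star_eq_conjTranspose, Matrix.det_conjTranspose, hdet]⟩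
    inv_mul_cancel := fun g => by
      apply Subtype.ext
      exact (Unitary.mem_iff.mp g.2.1).1 }

/-- `SO(n)` is a topological group. -/
instance instTopGroupSO (n : ℕ) : IsTopologicalGroup (Matrix.specialOrthogonalGroup (Fin n) ℝ) where
  continuous_mul := by
    apply Continuous.subtype_mk
    exact (continuous_mul.comp ((continuous_subtype_val.comp continuous_fst).prodMk
      (continuous_subtype_val.comp continuous_snd)))
  continuous_inv := by
    apply Continuous.subtype_mk
    exact continuous_star.comp continuous_subtype_val

namespace HaarSO3

open Function Matrix MeasureTheory Metric Module Real Set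
open scoped ENNReal Pointwise Quaternion

section PolarCoordinates

variable {E F : Type*}
  [NormedAddCommGroup E] [NormedSpace ℝ E] [FiniteDimensional ℝ E] [Nontrivial E]
  [MeasurableSpace E] [BorelSpace E]
  [NormedAddCommGroup F] [NormedSpace ℝ F] [FiniteDimensional ℝ F] [Nontrivial F]
  [MeasurableSpace F] [BorelSpace F]
  (μ : Measure E) [μ.IsAddHaarMeasure] (ν : Measure F) [ν.IsAddHaarMeasure]

theorem lintegral_volumeIoiPow (n : ℕ) {f : ℝ → ℝ≥0∞} (hf : Measurable f) :
    ∫⁻ r, f r ∂Measure.volumeIoiPow n = ∫⁻ r in Ioi (0 : ℝ), .ofReal (r ^ n) * f r := by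
  rw [Measure.volumeIoiPow, lintegral_withDensity_eq_lintegral_mul _ (by fun_prop)
    (g := fun r : Ioi (0 : ℝ) ↦ f r) (by fun_prop)]
  exact lintegral_subtype_comap measurableSet_Ioi fun r ↦ .ofReal (r ^ n) * f r

theorem lintegral_mul_fun_norm_addHaar {f : E → ℝ≥0∞} {g : ℝ → ℝ≥0∞}
    (hf : Measurable f) (hg : Measurable g) :
    ∫⁻ x, f (‖x‖⁻¹ • x) * g ‖x‖ ∂μ =
      (∫⁻ u, f u ∂μ.toSphere) *
        ∫⁻ r in Ioi (0 : ℝ), .ofReal (r ^ (finrank ℝ E - 1)) * g r := calc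
  _ = ∫⁻ x : ({0}ᶜ : Set E), f (‖x.1‖⁻¹ • x.1) * g ‖x.1‖ ∂μ.comap (↑) := by
    rw [lintegral_subtype_comap (measurableSet_singleton _).compl fun x ↦ f (‖x‖⁻¹ • x) * g ‖x‖,
      restrict_compl_singleton]
  _ = ∫⁻ p, f p.1 * g p.2 ∂μ.toSphere.prod (.volumeIoiPow (finrank ℝ E - 1)) := by
    rw [← μ.measurePreserving_homeomorphUnitSphereProd.lintegral_comp_emb
      (Homeomorph.measurableEmbedding _)]
    simp
  _ = _ := by
    rw [lintegral_prod_mul (f := fun u : sphere (0 : E) 1 ↦ f u)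
      (g := fun r : Ioi (0 : ℝ) ↦ g r) (by fun_prop) (by fun_prop), lintegral_volumeIoiPow _ hg]

theorem lintegral_fun_norm_addHaar {f : ℝ → ℝ≥0∞} (hf : Measurable f) :
    ∫⁻ x, f ‖x‖ ∂μ =
      μ.toSphere univ * ∫⁻ r in Ioi (0 : ℝ), .ofReal (r ^ (finrank ℝ E - 1)) * f r := by
  simpa using lintegral_mul_fun_norm_addHaar μ (f := 1) measurable_one hf

theorem lintegral_prod_fun_norm_addHaar {f : ℝ → ℝ → ℝ≥0∞} (hf : Measurable (uncurry f)) :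
    ∫⁻ p, f ‖p.1‖ ‖p.2‖ ∂μ.prod ν =
      μ.toSphere univ * ν.toSphere univ *
        ∫⁻ a in Ioi (0 : ℝ), ∫⁻ r in Ioi (0 : ℝ),
          .ofReal (a ^ (finrank ℝ E - 1)) * .ofReal (r ^ (finrank ℝ F - 1)) * f a r := by
  have hinner : Measurable fun a ↦
      ∫⁻ r in Ioi (0 : ℝ), .ofReal (r ^ (finrank ℝ F - 1)) * f a r :=
    Measurable.lintegral_prod_right' (f := fun p : ℝ × ℝ ↦
      ENNReal.ofReal (p.2 ^ (finrank ℝ F - 1)) * uncurry f p) (by fun_prop)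
  calc ∫⁻ p, f ‖p.1‖ ‖p.2‖ ∂μ.prod ν
    _ = ∫⁻ x, (∫⁻ y, f ‖x‖ ‖y‖ ∂ν) ∂μ :=
      lintegral_prod (fun p : E × F ↦ uncurry f (‖p.1‖, ‖p.2‖)) (by fun_prop)
    _ = ν.toSphere univ *
        ∫⁻ x, (∫⁻ r in Ioi (0 : ℝ), .ofReal (r ^ (finrank ℝ F - 1)) * f ‖x‖ r) ∂μ := by
      rw [← lintegral_const_mul _ (by fun_prop)]
      exact lintegral_congr fun x ↦ lintegral_fun_norm_addHaar ν (by fun_prop)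
    _ = _ := by
      rw [lintegral_fun_norm_addHaar μ hinner, ← mul_assoc, mul_comm (ν.toSphere univ)]
      simp_rw [← lintegral_const_mul' _ _ ENNReal.ofReal_ne_top, mul_assoc]

end PolarCoordinates

section Slopes

theorem lintegral_Ioi_eq_mul_lintegral_comp_mul_left {c : ℝ} (hc : 0 < c) (f : ℝ → ℝ≥0∞) :
    ∫⁻ r in Ioi (0 : ℝ), f r = .ofReal c * ∫⁻ r in Ioi (0 : ℝ), f (c * r) := by
  have himage : (c * ·) '' Ioi (0 : ℝ) = Ioi 0 := by
    rw [image_mul_left_Ioi hc, mul_zero]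
  have hderiv : ∀ r ∈ Ioi (0 : ℝ), HasDerivWithinAt (c * ·) c (Ioi 0) r := fun r _ ↦ by
    simpa using ((hasDerivAt_id r).const_mul c).hasDerivWithinAt
  conv_lhs => rw [← himage, lintegral_image_eq_lintegral_abs_deriv_mul measurableSet_Ioi hderiv
    (mul_right_injective₀ hc.ne').injOn, abs_of_pos hc, lintegral_const_mul' _ _ (by simp)]

theorem lintegral_Ioi_lintegral_Ioi_eq_slope {f : ℝ → ℝ → ℝ≥0∞} (hf : Measurable (uncurry f)) :
    ∫⁻ a in Ioi (0 : ℝ), ∫⁻ r in Ioi (0 : ℝ), f a r =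
      ∫⁻ t in Ioi (0 : ℝ), ∫⁻ a in Ioi (0 : ℝ), .ofReal a * f a (a * t) := calc
  _ = ∫⁻ a in Ioi (0 : ℝ), ∫⁻ t in Ioi (0 : ℝ), .ofReal a * f a (a * t) :=
    setLIntegral_congr_fun measurableSet_Ioi fun a ha ↦ by
      rw [lintegral_Ioi_eq_mul_lintegral_comp_mul_left ha, lintegral_const_mul' _ _ (by simp)]
  _ = _ := by
    refine lintegral_lintegral_swap ?_
    have : Measurable fun p : ℝ × ℝ ↦ .ofReal p.1 * uncurry f (p.1, p.1 * p.2) := by fun_prop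
    exact this.aemeasurable

theorem lintegral_Ioi_pow_mul_comp_mul_left {c : ℝ} (hc : 0 < c) (n : ℕ) (g : ℝ → ℝ≥0∞) :
    ∫⁻ r in Ioi (0 : ℝ), .ofReal (r ^ n) * g (c * r) =
      .ofReal (c⁻¹ ^ (n + 1)) * ∫⁻ r in Ioi (0 : ℝ), .ofReal (r ^ n) * g r := by
  rw [lintegral_Ioi_eq_mul_lintegral_comp_mul_left (inv_pos.2 hc), pow_succ',
    ENNReal.ofReal_mul (by positivity), mul_assoc,
    ← lintegral_const_mul' (.ofReal (c⁻¹ ^ n)) _ (by simp)]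
  simp_rw [← mul_assoc, mul_pow, ENNReal.ofReal_mul (pow_nonneg (inv_nonneg.2 hc.le) n),
    mul_inv_cancel₀ hc.ne', one_mul]

theorem exists_measurable_lintegral_Ioi_pow_mul (n : ℕ) : ∃ g : ℝ → ℝ≥0∞, Measurable g ∧
    ∫⁻ r in Ioi (0 : ℝ), .ofReal (r ^ n) * g r ≠ 0 ∧
      ∫⁻ r in Ioi (0 : ℝ), .ofReal (r ^ n) * g r ≠ ∞ := by
  have hg : Measurable ((Iio (1 : ℝ)).indicator (1 : ℝ → ℝ≥0∞)) :=
    measurable_one.indicator measurableSet_Iio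
  have hball : ∫⁻ r : Ioi (0 : ℝ), (Iio (1 : ℝ)).indicator 1 r.1 ∂Measure.volumeIoiPow n =
      Measure.volumeIoiPow n (Iio ⟨1, mem_Ioi.2 one_pos⟩) :=
    lintegral_indicator_one (measurableSet_Iio (a := (⟨1, mem_Ioi.2 one_pos⟩ : Ioi (0 : ℝ))))
  refine ⟨_, hg, ?_⟩
  rw [← lintegral_volumeIoiPow n hg, hball, Measure.volumeIoiPow_apply_Iio]
  exact ⟨ENNReal.ofReal_ne_zero_iff.2 (by positivity), ENNReal.ofReal_ne_top⟩

theorem lintegral_Ioi_pow_mul_comp_slope {f g : ℝ → ℝ≥0∞} (hg : Measurable g) (n : ℕ) (t : ℝ) :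
    ∫⁻ a in Ioi (0 : ℝ),
        .ofReal (a ^ n) * (f (a ^ 2 / (a ^ 2 + (a * t) ^ 2)) * g √(a ^ 2 + (a * t) ^ 2)) =
      .ofReal ((√(1 + t ^ 2))⁻¹ ^ (n + 1)) *
        (f (1 + t ^ 2)⁻¹ * ∫⁻ r in Ioi (0 : ℝ), .ofReal (r ^ n) * g r) := by
  have hradius (a : ℝ) (ha : 0 < a) : √(a ^ 2 + (a * t) ^ 2) = √(1 + t ^ 2) * a := by
    rw [show a ^ 2 + (a * t) ^ 2 = (1 + t ^ 2) * a ^ 2 by ring, sqrt_mul (by positivity),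
      sqrt_sq ha.le]
  have hratio (a : ℝ) (ha : 0 < a) : a ^ 2 / (a ^ 2 + (a * t) ^ 2) = (1 + t ^ 2)⁻¹ := by
    field_simp
  rw [mul_left_comm, ← lintegral_Ioi_pow_mul_comp_mul_left (by positivity),
    ← lintegral_const_mul _ (by fun_prop)]
  refine setLIntegral_congr_fun measurableSet_Ioi fun a (ha : 0 < a) ↦ ?_
  rw [hratio a ha, hradius a ha, mul_left_comm]

end Slopes

section SphereLaw

variable {E U V : Type*}
  [NormedAddCommGroup E] [InnerProductSpace ℝ E]
  [NormedAddCommGroup U] [InnerProductSpace ℝ U]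
  [NormedAddCommGroup V] [InnerProductSpace ℝ V]

theorem norm_eq_sqrt_norm_fst_sq_add_norm_snd_sq (φ : E ≃ₗᵢ[ℝ] WithLp 2 (U × V)) (x : E) :
    ‖x‖ = √(‖(φ x).fst‖ ^ 2 + ‖(φ x).snd‖ ^ 2) := by
  rw [← φ.norm_map, WithLp.prod_norm_eq_of_L2]

theorem norm_fst_normalize_sq (φ : E ≃ₗᵢ[ℝ] WithLp 2 (U × V)) (x : E) :
    ‖(φ (‖x‖⁻¹ • x)).fst‖ ^ 2 =
      ‖(φ x).fst‖ ^ 2 / (‖(φ x).fst‖ ^ 2 + ‖(φ x).snd‖ ^ 2) := by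
  rw [map_smul, WithLp.smul_fst, norm_smul, norm_inv, norm_norm, mul_pow, inv_pow,
    norm_eq_sqrt_norm_fst_sq_add_norm_snd_sq φ x, sq_sqrt (by positivity), div_eq_inv_mul]

variable
  [FiniteDimensional ℝ E] [MeasurableSpace E] [BorelSpace E]
  [FiniteDimensional ℝ U] [Nontrivial U] [MeasurableSpace U] [BorelSpace U]
  [FiniteDimensional ℝ V] [Nontrivial V] [MeasurableSpace V] [BorelSpace V]

theorem lintegral_fun_norm_fst_norm_snd (φ : E ≃ₗᵢ[ℝ] WithLp 2 (U × V))
    {f : ℝ → ℝ → ℝ≥0∞} (hf : Measurable (uncurry f)) :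
    ∫⁻ x, f ‖(φ x).fst‖ ‖(φ x).snd‖ =
      (volume : Measure U).toSphere univ * (volume : Measure V).toSphere univ *
        ∫⁻ t in Ioi (0 : ℝ), ∫⁻ a in Ioi (0 : ℝ),
          .ofReal (t ^ (finrank ℝ V - 1)) *
            (.ofReal (a ^ (finrank ℝ U + finrank ℝ V - 1)) * f a (a * t)) := by
  have hφ : MeasurePreserving (WithLp.ofLp ∘ φ) volume (volume.prod volume) :=
    (WithLp.volume_preserving_ofLp U V).comp φ.measurePreserving
  have hweight : Measurable (uncurry fun a r ↦
      .ofReal (a ^ (finrank ℝ U - 1)) * .ofReal (r ^ (finrank ℝ V - 1)) * f a r) := by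
    unfold uncurry at hf ⊢
    fun_prop
  have hpow (a t : ℝ) : a * (a ^ (finrank ℝ U - 1) * (a * t) ^ (finrank ℝ V - 1)) =
      t ^ (finrank ℝ V - 1) * a ^ (finrank ℝ U + finrank ℝ V - 1) := by
    have hU := finrank_pos (R := ℝ) (M := U)
    have hV := finrank_pos (R := ℝ) (M := V)
    rw [show finrank ℝ U + finrank ℝ V - 1 = 1 + (finrank ℝ U - 1) + (finrank ℝ V - 1) by omega]
    ring
  calc ∫⁻ x, f ‖(φ x).fst‖ ‖(φ x).snd‖
    _ = ∫⁻ p : U × V, f ‖p.1‖ ‖p.2‖ ∂volume.prod volume :=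
      hφ.lintegral_comp (f := fun p ↦ uncurry f (‖p.1‖, ‖p.2‖)) (by fun_prop)
    _ = _ := by
      rw [lintegral_prod_fun_norm_addHaar _ _ hf, lintegral_Ioi_lintegral_Ioi_eq_slope hweight]
      congr 1
      refine setLIntegral_congr_fun measurableSet_Ioi fun t (ht : 0 < t) ↦
        setLIntegral_congr_fun measurableSet_Ioi fun a (ha : 0 < a) ↦ ?_
      simp_rw [← mul_assoc]
      rw [← ENNReal.ofReal_mul ha.le, ← ENNReal.ofReal_mul (by positivity),
        ← ENNReal.ofReal_mul (by positivity), mul_assoc a, hpow]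

theorem lintegral_toSphere_norm_fst_sq (φ : E ≃ₗᵢ[ℝ] WithLp 2 (U × V))
    {f : ℝ → ℝ≥0∞} (hf : Measurable f) :
    ∫⁻ u, f (‖(φ u).fst‖ ^ 2) ∂(volume : Measure E).toSphere =
      (volume : Measure U).toSphere univ * (volume : Measure V).toSphere univ *
        ∫⁻ t in Ioi (0 : ℝ),
          .ofReal (t ^ (finrank ℝ V - 1)) *
            (.ofReal ((√(1 + t ^ 2))⁻¹ ^ (finrank ℝ U + finrank ℝ V)) * f (1 + t ^ 2)⁻¹) := by
  have hdim : finrank ℝ E = finrank ℝ U + finrank ℝ V := by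
    rw [φ.toLinearEquiv.finrank_eq, (WithLp.linearEquiv 2 ℝ (U × V)).finrank_eq, finrank_prod]
  have hpos : 0 < finrank ℝ E := hdim ▸ Nat.add_pos_left finrank_pos _
  have : Nontrivial E := finrank_pos_iff.1 hpos
  -- Both sides become integrals over `E` once multiplied by the mass of a radial weight `g`.
  obtain ⟨g, hg, hg₀, hg_top⟩ := exists_measurable_lintegral_Ioi_pow_mul (finrank ℝ E - 1)
  refine (ENNReal.mul_left_inj hg₀ hg_top).1 ?_
  calc
    _ = ∫⁻ x : E, f (‖(φ (‖x‖⁻¹ • x)).fst‖ ^ 2) * g ‖x‖ :=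
      (lintegral_mul_fun_norm_addHaar volume (f := fun x ↦ f (‖(φ x).fst‖ ^ 2))
        (by fun_prop) hg).symm
    _ = _ := by
      simp_rw [norm_fst_normalize_sq, norm_eq_sqrt_norm_fst_sq_add_norm_snd_sq φ]
      rw [lintegral_fun_norm_fst_norm_snd φ (f := fun a r ↦
        f (a ^ 2 / (a ^ 2 + r ^ 2)) * g √(a ^ 2 + r ^ 2)) (by unfold uncurry; fun_prop),
        mul_assoc (_ * _), ← lintegral_mul_const' _ _ hg_top, ← hdim]
      congr 1
      refine setLIntegral_congr_fun measurableSet_Ioi fun t _ ↦ ?_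
      rw [lintegral_const_mul' _ _ (by simp), lintegral_Ioi_pow_mul_comp_slope hg,
        Nat.sub_add_cancel hpos, mul_assoc, mul_assoc]

end SphereLaw

section Surface

variable {E : Type*} [NormedAddCommGroup E] [InnerProductSpace ℝ E] [FiniteDimensional ℝ E]
  [MeasurableSpace E] [BorelSpace E]

theorem toSphere_univ_of_finrank_eq_one (hE : finrank ℝ E = 1) :
    (volume : Measure E).toSphere univ = 2 := by
  have : Nontrivial E := finrank_pos_iff.1 (hE ▸ one_pos)
  rw [Measure.toSphere_apply_univ, InnerProductSpace.volume_ball_of_dim_odd (k := 0) hE, hE]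
  simp

theorem toSphere_univ_of_finrank_eq_three (hE : finrank ℝ E = 3) :
    (volume : Measure E).toSphere univ = .ofReal (4 * π) := by
  have : Nontrivial E := finrank_pos_iff.1 (hE ▸ three_pos)
  rw [Measure.toSphere_apply_univ, InnerProductSpace.volume_ball_of_dim_odd (k := 1) hE, hE,
    ENNReal.ofReal_one, one_pow, one_mul, ← ENNReal.ofReal_natCast, ← ENNReal.ofReal_mul (by simp)]
  congr 1
  norm_num [Nat.doubleFactorial]
  ring

theorem toSphere_univ_of_finrank_eq_four (hE : finrank ℝ E = 4) :
    (volume : Measure E).toSphere univ = .ofReal (2 * π ^ 2) := by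
  have : Nontrivial E := finrank_pos_iff.1 (hE ▸ four_pos)
  rw [Measure.toSphere_apply_univ, InnerProductSpace.volume_ball_of_dim_even (k := 2) hE, hE,
    ENNReal.ofReal_one, one_pow, one_mul, ← ENNReal.ofReal_natCast, ← ENNReal.ofReal_mul (by simp)]
  congr 1
  norm_num [Nat.factorial]
  ring

theorem lintegral_toSphere_inner_sq_of_finrank_eq_four (hE : finrank ℝ E = 4) {e : E}
    (he : ‖e‖ = 1) {f : ℝ → ℝ≥0∞} (hf : Measurable f) :
    ∫⁻ u, f (inner ℝ e u ^ 2) ∂(volume : Measure E).toSphere =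
      .ofReal (8 * π) * ∫⁻ t in Ioi (0 : ℝ),
        .ofReal (t ^ 2) * (.ofReal ((√(1 + t ^ 2))⁻¹ ^ 4) * f (1 + t ^ 2)⁻¹) := by
  have he₀ : e ≠ 0 := norm_ne_zero_iff.1 (he ▸ one_ne_zero)
  have : Fact (finrank ℝ E = 3 + 1) := ⟨hE⟩
  have hU : finrank ℝ (ℝ ∙ e) = 1 := finrank_span_singleton he₀
  have hV : finrank ℝ (ℝ ∙ e)ᗮ = 3 := Submodule.finrank_orthogonal_span_singleton he₀
  have : Nontrivial (ℝ ∙ e) := finrank_pos_iff.1 (hU ▸ one_pos)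
  have : Nontrivial (ℝ ∙ e)ᗮ := finrank_pos_iff.1 (hV ▸ three_pos)
  have hfst (x : E) : ‖((ℝ ∙ e).orthogonalDecomposition x).fst‖ ^ 2 = inner ℝ e x ^ 2 := by
    rw [← Submodule.norm_coe, Submodule.fst_orthogonalDecomposition_apply,
      ← Submodule.starProjection_apply, Submodule.starProjection_unit_singleton ℝ he, norm_smul,
      he, mul_one, norm_eq_abs, sq_abs]
  have := lintegral_toSphere_norm_fst_sq (ℝ ∙ e).orthogonalDecomposition hf
  rw [toSphere_univ_of_finrank_eq_one hU, toSphere_univ_of_finrank_eq_three hV, hU, hV] at this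
  simp_rw [hfst] at this
  rw [this, ← ENNReal.ofReal_ofNat 2, ← ENNReal.ofReal_mul zero_le_two]
  ring_nf

theorem toSphere_congr_of_image_eq (φ : E ≃ₗᵢ[ℝ] E) {s t : Set (sphere (0 : E) 1)}
    (hs : MeasurableSet s) (ht : MeasurableSet t)
    (hst : φ '' (Subtype.val '' s) = Subtype.val '' t) :
    (volume : Measure E).toSphere s = (volume : Measure E).toSphere t := by
  have hsector :
      φ '' (Ioo (0 : ℝ) 1 • (Subtype.val '' s)) = Ioo (0 : ℝ) 1 • (Subtype.val '' t) := by
    rw [← hst]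
    exact image_image2_distrib_right φ.map_smul
  rw [Measure.toSphere_apply' _ hs, Measure.toSphere_apply' _ ht, ← hsector,
    ← φ.measurePreserving.measure_preimage_emb φ.toHomeomorph.measurableEmbedding (φ '' _),
    preimage_image_eq _ φ.injective]

end Surface

section TraceVariable

theorem image_Ioi_four_mul_inv_one_add_sq_sub_one :
    (fun t : ℝ ↦ 4 * (1 + t ^ 2)⁻¹ - 1) '' Ioi 0 = Ioo (-1) 3 := by
  ext y
  simp only [mem_image, mem_Ioi, mem_Ioo]
  constructor
  · rintro ⟨t, ht, rfl⟩
    have hlt : (1 + t ^ 2)⁻¹ < 1 := inv_lt_one_of_one_lt₀ (by nlinarith)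
    have hpos : 0 < (1 + t ^ 2)⁻¹ := by positivity
    constructor <;> linarith
  · rintro ⟨hy₁, hy₃⟩
    have hy : 0 < y + 1 := by linarith
    refine ⟨√((3 - y) / (y + 1)), sqrt_pos.2 (div_pos (by linarith) hy), ?_⟩
    rw [sq_sqrt (div_nonneg (by linarith) hy.le)]
    field_simp
    ring

theorem injOn_four_mul_inv_one_add_sq_sub_one :
    InjOn (fun t : ℝ ↦ 4 * (1 + t ^ 2)⁻¹ - 1) (Ioi 0) := by
  intro s hs t ht hst
  have hsq : 1 + s ^ 2 = 1 + t ^ 2 := by simpa using hst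
  exact (sq_eq_sq₀ (le_of_lt hs) (le_of_lt ht)).1 (add_left_cancel hsq)

theorem lintegral_Ioi_comp_four_mul_inv_one_add_sq_sub_one (f : ℝ → ℝ≥0∞) :
    ∫⁻ t in Ioi (0 : ℝ),
        .ofReal (t ^ 2) * (.ofReal ((√(1 + t ^ 2))⁻¹ ^ 4) * f (4 * (1 + t ^ 2)⁻¹ - 1)) =
      ∫⁻ y in Ioo (-1 : ℝ) 3, .ofReal (√(3 - y) / √(y + 1) / 8) * f y := by
  have hderiv (t : ℝ) (_ : t ∈ Ioi 0) : HasDerivWithinAt (fun t : ℝ ↦ 4 * (1 + t ^ 2)⁻¹ - 1)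
      (-(8 * t / (1 + t ^ 2) ^ 2)) (Ioi 0) t := by
    have h := (((hasDerivAt_pow 2 t).const_add 1).inv (by positivity)).const_mul 4 |>.sub_const 1
    exact (h.congr_deriv (by simp; ring)).hasDerivWithinAt
  rw [← image_Ioi_four_mul_inv_one_add_sq_sub_one, lintegral_image_eq_lintegral_abs_deriv_mul
    measurableSet_Ioi hderiv injOn_four_mul_inv_one_add_sq_sub_one]
  refine setLIntegral_congr_fun measurableSet_Ioi fun t (ht : 0 < t) ↦ ?_
  have hden : 0 < 1 + t ^ 2 := by positivity
  have hslope : √(3 - (4 * (1 + t ^ 2)⁻¹ - 1)) / √(4 * (1 + t ^ 2)⁻¹ - 1 + 1) = t := by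
    have hratio : (3 - (4 * (1 + t ^ 2)⁻¹ - 1)) / (4 * (1 + t ^ 2)⁻¹ - 1 + 1) = t ^ 2 := by
      field_simp
      ring
    rw [← sqrt_div' _ (by rw [sub_add_cancel]; positivity), hratio, sqrt_sq ht.le]
  have hfour : (√(1 + t ^ 2))⁻¹ ^ 4 = ((1 + t ^ 2) ^ 2)⁻¹ := by
    rw [inv_pow, show 4 = 2 * 2 from rfl, pow_mul, sq_sqrt hden.le]
  rw [hslope, hfour, ← mul_assoc, ← mul_assoc, ← ENNReal.ofReal_mul (by positivity),
    ← ENNReal.ofReal_mul (by positivity), abs_neg, abs_of_pos (by positivity)]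
  congr 2
  field_simp

end TraceVariable

section EulerRodrigues

variable {R : Type*} [CommRing R]

/-- The Euler–Rodrigues matrix of a quaternion `q`: the matrix, in the basis `i, j, k`, of the
map `v ↦ q * v * star q` on imaginary quaternions. Its entries are quadratic in `q`, and it is a
rotation when `q` has norm one. -/
def eulerRodrigues : ℍ[R] →* Matrix (Fin 3) (Fin 3) R where
  toFun q := !![
    q.re ^ 2 + q.imI ^ 2 - q.imJ ^ 2 - q.imK ^ 2, 2 * (q.imI * q.imJ - q.re * q.imK),
      2 * (q.imI * q.imK + q.re * q.imJ);
    2 * (q.imI * q.imJ + q.re * q.imK), q.re ^ 2 - q.imI ^ 2 + q.imJ ^ 2 - q.imK ^ 2,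
      2 * (q.imJ * q.imK - q.re * q.imI);
    2 * (q.imI * q.imK - q.re * q.imJ), 2 * (q.imJ * q.imK + q.re * q.imI),
      q.re ^ 2 - q.imI ^ 2 - q.imJ ^ 2 + q.imK ^ 2]
  map_one' := by
    ext i j
    fin_cases i <;> fin_cases j <;> simp
  map_mul' p q := by
    ext i j
    fin_cases i <;> fin_cases j <;> simp [mul_apply, Fin.sum_univ_three] <;> ring

theorem eulerRodrigues_star (q : ℍ[R]) : eulerRodrigues (star q) = (eulerRodrigues q)ᵀ := by
  ext i j
  fin_cases i <;> fin_cases j <;> simp [eulerRodrigues] <;> ring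

theorem eulerRodrigues_coe (r : R) : eulerRodrigues (r : ℍ[R]) = r ^ 2 • 1 := by
  ext i j
  fin_cases i <;> fin_cases j <;> simp [eulerRodrigues]

theorem eulerRodrigues_mul_transpose (q : ℍ[R]) :
    eulerRodrigues q * (eulerRodrigues q)ᵀ = Quaternion.normSq q ^ 2 • 1 := by
  rw [← eulerRodrigues_star, ← map_mul, Quaternion.self_mul_star, eulerRodrigues_coe]

theorem det_eulerRodrigues (q : ℍ[R]) : (eulerRodrigues q).det = Quaternion.normSq q ^ 3 := by
  simp [eulerRodrigues, det_fin_three, Quaternion.normSq_def']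
  ring

theorem trace_eulerRodrigues (q : ℍ[R]) :
    (eulerRodrigues q).trace = 4 * q.re ^ 2 - Quaternion.normSq q := by
  simp [eulerRodrigues, trace_fin_three, Quaternion.normSq_def']
  ring

theorem normSq_mk_zero (v : Fin 3 → R) :
    Quaternion.normSq (⟨0, v 0, v 1, v 2⟩ : ℍ[R]) = v ⬝ᵥ v := by
  refine (Quaternion.normSq_def' _).trans ?_
  rw [vec3_dotProduct]
  ring

theorem eulerRodrigues_mk_zero (v : Fin 3 → R) :
    eulerRodrigues ⟨0, v 0, v 1, v 2⟩ = (2 : R) • vecMulVec v v - (v ⬝ᵥ v) • 1 := by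
  ext i j
  fin_cases i <;> fin_cases j <;>
    simp [eulerRodrigues, vecMulVec_apply, vec3_dotProduct] <;> ring

theorem continuous_eulerRodrigues :
    Continuous (eulerRodrigues : ℍ → Matrix (Fin 3) (Fin 3) ℝ) := by
  have := Quaternion.continuous_re
  have := Quaternion.continuous_imI
  have := Quaternion.continuous_imJ
  have := Quaternion.continuous_imK
  refine continuous_matrix fun i j ↦ ?_
  fin_cases i <;> fin_cases j <;>
    simp only [eulerRodrigues, MonoidHom.coe_mk, OneHom.coe_mk, of_apply, cons_val', cons_val,
      Fin.zero_eta, Fin.mk_one, Fin.reduceFinMk] <;> fun_prop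

end EulerRodrigues

noncomputable section Isometries

variable {n : Type*} [Fintype n] [DecidableEq n]

/-- The matrix of a linear isometry of Euclidean space in the standard basis. -/
def isometryMatrix : (EuclideanSpace ℝ n ≃ₗᵢ[ℝ] EuclideanSpace ℝ n) →* Matrix n n ℝ :=
  (MonoidHomClass.toMonoidHom (toEuclideanCLM (n := n) (𝕜 := ℝ)).symm).comp
    ((unitary _).subtype.comp Unitary.linearIsometryEquiv.symm.toMonoidHom)

theorem isometryMatrix_mulVec (φ : EuclideanSpace ℝ n ≃ₗᵢ[ℝ] EuclideanSpace ℝ n)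
    (x : EuclideanSpace ℝ n) : isometryMatrix φ *ᵥ x.ofLp = (φ x).ofLp := by
  have hφ : toEuclideanCLM (𝕜 := ℝ) (isometryMatrix φ) = φ :=
    (toEuclideanCLM (𝕜 := ℝ)).apply_symm_apply _
  rw [← ofLp_toEuclideanCLM (𝕜 := ℝ), hφ]
  rfl

theorem isometryMatrix_reflection {v : EuclideanSpace ℝ n} (hv : ‖v‖ = 1) :
    isometryMatrix (ℝ ∙ v)ᗮ.reflection = 1 - (2 : ℝ) • vecMulVec v.ofLp v.ofLp := by
  refine ext_iff_mulVec.2 fun x ↦ (isometryMatrix_mulVec _ (.toLp 2 x)).trans ?_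
  have hx : inner ℝ v (.toLp 2 x) = v.ofLp ⬝ᵥ x := by
    rw [EuclideanSpace.inner_eq_star_dotProduct, star_trivial, dotProduct_comm]
  rw [Submodule.reflection_orthogonal_apply, Submodule.reflection_singleton_apply, hx, hv,
    sub_mulVec, one_mulVec, smul_mulVec, vecMulVec_mulVec]
  simp [two_smul]

theorem exists_isometryMatrix_eq {A : Matrix n n ℝ} (hA : A ∈ orthogonalGroup n ℝ) :
    ∃ φ, isometryMatrix φ = A :=
  ⟨Unitary.linearIsometryEquiv ⟨_, Unitary.map_mem (toEuclideanCLM (𝕜 := ℝ)) hA⟩,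
    (toEuclideanCLM (𝕜 := ℝ)).symm_apply_apply A⟩

end Isometries

noncomputable section Rotation

theorem mem_sphere_zero_one_iff_normSq_eq_one {q : ℍ} :
    q ∈ sphere 0 1 ↔ Quaternion.normSq q = 1 := by
  rw [mem_sphere_zero_iff_norm, Quaternion.normSq_eq_norm_mul_self, ← sq,
    pow_eq_one_iff_of_nonneg (norm_nonneg q) two_ne_zero]

/- Minus the reflection in the plane `vᗮ` is the half-turn about `v`, which is conjugation by the
imaginary unit quaternion `v`. -/
theorem exists_isometryMatrix_reflection_eq_neg {v : EuclideanSpace ℝ (Fin 3)} (hv : ‖v‖ = 1) :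
    ∃ u : sphere (0 : ℍ) 1, isometryMatrix (ℝ ∙ v)ᗮ.reflection = -eulerRodrigues u.1 := by
  have hdot : v.ofLp ⬝ᵥ v.ofLp = 1 := by
    simpa [hv] using (EuclideanSpace.inner_eq_star_dotProduct v v).symm
  have hnormSq : Quaternion.normSq (⟨0, v 0, v 1, v 2⟩ : ℍ) = 1 := by
    rw [normSq_mk_zero, hdot]
  refine ⟨⟨_, mem_sphere_zero_one_iff_normSq_eq_one.2 hnormSq⟩, ?_⟩
  rw [isometryMatrix_reflection hv, eulerRodrigues_mk_zero, hdot, one_smul, neg_sub]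

theorem exists_isometryMatrix_reflection_eq (v : EuclideanSpace ℝ (Fin 3)) :
    ∃ u : sphere (0 : ℍ) 1, isometryMatrix (ℝ ∙ v)ᗮ.reflection = eulerRodrigues u.1 ∨
      isometryMatrix (ℝ ∙ v)ᗮ.reflection = -eulerRodrigues u.1 := by
  obtain rfl | hv := eq_or_ne v 0
  · have hone : (ℝ ∙ (0 : EuclideanSpace ℝ (Fin 3)))ᗮ.reflection = 1 :=
      LinearIsometryEquiv.ext fun x ↦ Submodule.reflection_mem_subspace_eq_self (by simp)
    exact ⟨1, .inl (by rw [hone, map_one, unitSphere.coe_one, map_one])⟩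
  · have hspan : (ℝ ∙ (‖v‖⁻¹ • v)) = ℝ ∙ v :=
      Submodule.span_singleton_smul_eq (inv_ne_zero (norm_ne_zero_iff.2 hv)).isUnit v
    simp_rw [← hspan]
    exact (exists_isometryMatrix_reflection_eq_neg (norm_smul_inv_norm hv)).imp fun _ ↦ .inr

theorem exists_isometryMatrix_eq_or_eq_neg
    (φ : EuclideanSpace ℝ (Fin 3) ≃ₗᵢ[ℝ] EuclideanSpace ℝ (Fin 3)) :
    ∃ u : sphere (0 : ℍ) 1, isometryMatrix φ = eulerRodrigues u ∨
      isometryMatrix φ = -eulerRodrigues u := by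
  obtain ⟨l, -, rfl⟩ := φ.reflections_generate_dim
  refine List.prod_induction
    (p := fun φ ↦ ∃ u : sphere (0 : ℍ) 1, isometryMatrix φ = eulerRodrigues u ∨
      isometryMatrix φ = -eulerRodrigues u) ?_ ⟨1, .inl (by simp)⟩ ?_
  · rintro φ ψ ⟨u, hu⟩ ⟨v, hv⟩
    refine ⟨u * v, ?_⟩
    rcases hu with hu | hu <;> rcases hv with hv | hv <;> simp [hu, hv]
  · simpa using fun v _ ↦ exists_isometryMatrix_reflection_eq v

/-- The covering homomorphism from the group of unit quaternions onto the rotation group. -/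
def rotation : sphere (0 : ℍ) 1 →* specialOrthogonalGroup (Fin 3) ℝ where
  toFun u := ⟨eulerRodrigues u.1, by
    have horth := eulerRodrigues_mul_transpose u.1
    have hdet := det_eulerRodrigues u.1
    rw [mem_sphere_zero_one_iff_normSq_eq_one.1 u.2, one_pow] at horth hdet
    exact mem_specialOrthogonalGroup_iff.2
      ⟨(mem_orthogonalGroup_iff _ _).2 (horth.trans (one_smul _ _)), hdet⟩⟩
  map_one' := Subtype.ext (map_one eulerRodrigues)
  map_mul' u v := Subtype.ext (map_mul eulerRodrigues u.1 v.1)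

theorem continuous_rotation : Continuous rotation :=
  (continuous_eulerRodrigues.comp continuous_subtype_val).subtype_mk _

theorem surjective_rotation : Surjective rotation := by
  rintro ⟨A, hA⟩
  obtain ⟨horth, hdet⟩ := mem_specialOrthogonalGroup_iff.1 hA
  obtain ⟨φ, rfl⟩ := exists_isometryMatrix_eq horth
  obtain ⟨u, hu | hu⟩ := exists_isometryMatrix_eq_or_eq_neg φ
  · exact ⟨u, Subtype.ext hu.symm⟩
  · have hdet' : (eulerRodrigues u.1).det = 1 := (rotation u).2.2
    rw [hu, det_neg, hdet'] at hdet
    norm_num at hdet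

theorem trace_rotation (u : sphere (0 : ℍ) 1) :
    (rotation u).1.trace = 4 * inner ℝ 1 u.1 ^ 2 - 1 := by
  refine (trace_eulerRodrigues u.1).trans ?_
  rw [mem_sphere_zero_one_iff_normSq_eq_one.1 u.2, Quaternion.inner_def, one_mul,
    Quaternion.re_star]

end Rotation

section Haar

section UnitQuaternions

variable [MeasurableSpace ℍ] [BorelSpace ℍ]

theorem toSphere_preimage_mul_left (u : sphere (0 : ℍ) 1) {s : Set (sphere (0 : ℍ) 1)}
    (hs : MeasurableSet s) :
    (volume : Measure ℍ).toSphere ((u * ·) ⁻¹' s) = (volume : Measure ℍ).toSphere s := by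
  let φ : ℍ ≃ₗᵢ[ℝ] ℍ := LinearIsometry.toLinearIsometryEquiv
    ⟨LinearMap.mulLeft ℝ u.1, fun q ↦ by simp⟩ rfl
  refine toSphere_congr_of_image_eq φ (measurable_const_mul u hs) hs ?_
  calc φ '' (Subtype.val '' ((u * ·) ⁻¹' s))
    _ = Subtype.val '' ((u * ·) '' ((u * ·) ⁻¹' s)) := by
      rw [image_image, image_image]
      rfl
    _ = Subtype.val '' s := by rw [image_preimage_eq _ (Group.mulLeft_bijective u).surjective]

instance isHaarMeasure_toSphere : (volume : Measure ℍ).toSphere.IsHaarMeasure where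
  map_mul_left_eq_self u := Measure.ext fun _ hs ↦ by
    rw [Measure.map_apply (measurable_const_mul u) hs, toSphere_preimage_mul_left u hs]

end UnitQuaternions

theorem measurable_trace {n : Type*} [Fintype n] [DecidableEq n]
    [MeasurableSpace (specialOrthogonalGroup n ℝ)]
    [OpensMeasurableSpace (specialOrthogonalGroup n ℝ)] :
    Measurable fun g : specialOrthogonalGroup n ℝ ↦ g.1.trace :=
  continuous_subtype_val.matrix_trace.measurable

variable [MeasurableSpace (specialOrthogonalGroup (Fin 3) ℝ)]
  [BorelSpace (specialOrthogonalGroup (Fin 3) ℝ)]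
  (μ : Measure (specialOrthogonalGroup (Fin 3) ℝ)) [μ.IsHaarMeasure] [IsProbabilityMeasure μ]

theorem measurePreserving_rotation [MeasurableSpace ℍ] [BorelSpace ℍ] :
    MeasurePreserving rotation
      (ENNReal.ofReal (2 * π ^ 2)⁻¹ • (volume : Measure ℍ).toSphere) μ := by
  have : CompactSpace (specialOrthogonalGroup (Fin 3) ℝ) :=
    surjective_rotation.compactSpace continuous_rotation
  have := Measure.IsHaarMeasure.smul (volume : Measure ℍ).toSphere
    (ENNReal.ofReal_ne_zero_iff.2 (inv_pos.2 (by positivity : 0 < 2 * π ^ 2)))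
    ENNReal.ofReal_ne_top
  refine rotation.measurePreserving continuous_rotation surjective_rotation ?_
  rw [measure_univ (μ := μ), Measure.smul_apply, smul_eq_mul,
    toSphere_univ_of_finrank_eq_four Quaternion.finrank_eq_four,
    ← ENNReal.ofReal_mul (by positivity), inv_mul_cancel₀ (by positivity), ENNReal.ofReal_one]

theorem lintegral_comp_trace {f : ℝ → ℝ≥0∞} (hf : Measurable f) :
    ∫⁻ g, f g.1.trace ∂μ =
      ∫⁻ y in Ioo (-1 : ℝ) 3, .ofReal (1 / (2 * π) * √(3 - y) / √(y + 1)) * f y := by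
  borelize ℍ
  calc ∫⁻ g, f g.1.trace ∂μ
    _ = .ofReal (2 * π ^ 2)⁻¹ *
        ∫⁻ u, f (4 * inner ℝ 1 u.1 ^ 2 - 1) ∂(volume : Measure ℍ).toSphere := by
      rw [← (measurePreserving_rotation μ).lintegral_comp (hf.fun_comp measurable_trace),
        lintegral_smul_measure, smul_eq_mul]
      simp_rw [trace_rotation]
    _ = .ofReal (2 * π ^ 2)⁻¹ * (.ofReal (8 * π) *
        ∫⁻ y in Ioo (-1 : ℝ) 3, .ofReal (√(3 - y) / √(y + 1) / 8) * f y) := by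
      rw [lintegral_toSphere_inner_sq_of_finrank_eq_four Quaternion.finrank_eq_four norm_one
        (f := fun s ↦ f (4 * s - 1)) (by fun_prop),
        lintegral_Ioi_comp_four_mul_inv_one_add_sq_sub_one]
    _ = _ := by
      rw [← mul_assoc, ← ENNReal.ofReal_mul (by positivity),
        ← lintegral_const_mul' _ _ ENNReal.ofReal_ne_top]
      refine lintegral_congr fun y ↦ ?_
      rw [← mul_assoc, ← ENNReal.ofReal_mul (by positivity)]
      congr 2
      field_simp

theorem map_trace_eq_withDensity :
    μ.map (fun g ↦ g.1.trace) = (volume.restrict (Icc (-1) 3)).withDensity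
      fun y ↦ .ofReal (1 / (2 * π) * √(3 - y) / √(y + 1)) := by
  ext A hA
  have hind : Measurable (A.indicator (1 : ℝ → ℝ≥0∞)) := measurable_one.indicator hA
  calc μ.map (fun g ↦ g.1.trace) A
    _ = ∫⁻ g, A.indicator 1 g.1.trace ∂μ := by
      rw [← lintegral_indicator_one hA, lintegral_map hind measurable_trace]
    _ = _ := by
      rw [lintegral_comp_trace μ hind, withDensity_apply _ hA, restrict_Ioo_eq_restrict_Icc,
        ← lintegral_indicator hA]
      refine lintegral_congr fun y ↦ ?_
      by_cases hy : y ∈ A <;> simp [hy]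

end Haar

end HaarSO3

open MeasureTheory Real in
/-- Under the normalized Haar measure of `SO(3)`, the trace has density
`y ↦ (1/(2π)) √(3-y)/√(y+1)` on `[-1, 3]`. -/
theorem haar_SO3_trace_density
    [MeasurableSpace (Matrix.specialOrthogonalGroup (Fin 3) ℝ)]
    [BorelSpace (Matrix.specialOrthogonalGroup (Fin 3) ℝ)]
    (μ : Measure (Matrix.specialOrthogonalGroup (Fin 3) ℝ))
    [μ.IsHaarMeasure] [IsProbabilityMeasure μ] (A : Set ℝ) (hA : MeasurableSet A) :
    μ {g : Matrix.specialOrthogonalGroup (Fin 3) ℝ |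
        Matrix.trace ((g : Matrix (Fin 3) (Fin 3) ℝ)) ∈ A} =
      ENNReal.ofReal
        (∫ y in A ∩ Set.Icc (-1 : ℝ) 3, (1 / (2 * π)) * Real.sqrt (3 - y) / Real.sqrt (y + 1)) := by
  have hlaw : μ {g | g.1.trace ∈ A} =
      ∫⁻ y in A ∩ Set.Icc (-1) 3, .ofReal (1 / (2 * π) * √(3 - y) / √(y + 1)) := by
    rw [← Measure.restrict_restrict hA, ← withDensity_apply _ hA,
      ← HaarSO3.map_trace_eq_withDensity μ, Measure.map_apply HaarSO3.measurable_trace hA]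
    rfl
  rw [integral_eq_lintegral_of_nonneg_ae (ae_of_all _ fun y ↦ by positivity)
    (Measurable.aestronglyMeasurable (by fun_prop)), ← hlaw,
    ENNReal.ofReal_toReal (measure_ne_top μ _)]
end

section
/- Let SO(3) be the group of 3×3 real special orthogonal matrices with normalized Haar probability measure μ, and define the rotation angle t : SO(3) → [0,π] by t(g) = arccos((tr(g) − 1)/2). Then the pushforward measure t_*μ is absolutely continuous with respect to Lebesgue measure with density s ↦ (1/π)(1 − cos s) on [0,π]; equivalently, for every Borel set A ⊆ ℝ, μ({g : t(g) ∈ A}) = ∫_{A ∩ [0,π]} (1/π)(1 − cos s) ds. -/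
/-!
Conjugation by unit quaternions is a surjective continuous homomorphism from the sphere `S³` onto
`SO(3)`, so it carries the rotation-invariant measure of `S³` to a multiple of the Haar measure.
If the real part of `q` is `cos θ`, the trace of the rotation attached to `q` is
`4 cos² θ - 1 = 1 + 2 cos 2θ`, that is, the rotation angle is `2θ` folded into `[0, π]`.
On `S³` the latitude `θ` has density proportional to `sin² θ = (1 - cos 2θ) / 2`, because the
parallel at latitude `θ` is a 2-sphere of radius `sin θ`.
-/

namespace RotationAngle

open Matrix Quaternion MeasureTheory Set Metric Module Real
open scoped ENNReal Pointwise RealInnerProductSpace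

section Conjugation

variable {R : Type*} [CommRing R]

/-- The purely imaginary quaternion with coordinate vector `v`, through which `R³` is regarded as
a subspace of the quaternions. -/
@[simps]
def pureQuaternion (v : Fin 3 → R) : ℍ[R] :=
  ⟨0, v 0, v 1, v 2⟩

theorem pureQuaternion_injective : Function.Injective (pureQuaternion : (Fin 3 → R) → ℍ[R]) := by
  intro v w h
  ext i
  fin_cases i
  exacts [congrArg (·.imI) h, congrArg (·.imJ) h, congrArg (·.imK) h]

theorem pureQuaternion_smul (r : R) (v : Fin 3 → R) :
    pureQuaternion (r • v) = r • pureQuaternion v := by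
  ext <;> simp

theorem pureQuaternion_mul (v w : Fin 3 → R) :
    pureQuaternion v * pureQuaternion w =
      -((v ⬝ᵥ w : R) : ℍ[R]) + pureQuaternion (v ⨯₃ w) := by
  ext <;> simp [cross_apply, dotProduct, Fin.sum_univ_three] <;> ring

/-- The matrix of `v ↦ q * v * star q` on purely imaginary quaternions
(see `pureQuaternion_conjMatrix_mulVec`). For `q` of norm `1` it is a rotation. -/
def conjMatrix (q : ℍ[R]) : Matrix (Fin 3) (Fin 3) R :=
  !![q.re ^ 2 + q.imI ^ 2 - q.imJ ^ 2 - q.imK ^ 2,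
      2 * (q.imI * q.imJ - q.re * q.imK), 2 * (q.imI * q.imK + q.re * q.imJ);
    2 * (q.imI * q.imJ + q.re * q.imK),
      q.re ^ 2 - q.imI ^ 2 + q.imJ ^ 2 - q.imK ^ 2, 2 * (q.imJ * q.imK - q.re * q.imI);
    2 * (q.imI * q.imK - q.re * q.imJ), 2 * (q.imJ * q.imK + q.re * q.imI),
      q.re ^ 2 - q.imI ^ 2 - q.imJ ^ 2 + q.imK ^ 2]

theorem pureQuaternion_conjMatrix_mulVec (q : ℍ[R]) (v : Fin 3 → R) :
    pureQuaternion (conjMatrix q *ᵥ v) = q * pureQuaternion v * star q := by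
  ext <;> simp [conjMatrix, dotProduct, Fin.sum_univ_three] <;> ring

theorem conjMatrix_mul (p q : ℍ[R]) : conjMatrix (p * q) = conjMatrix p * conjMatrix q := by
  refine ext_of_mulVec_single fun i => pureQuaternion_injective ?_
  rw [← mulVec_mulVec]
  simp only [pureQuaternion_conjMatrix_mulVec, star_mul, mul_assoc]

theorem conjMatrix_star (q : ℍ[R]) : conjMatrix (star q) = (conjMatrix q)ᵀ := by
  ext i j
  fin_cases i <;> fin_cases j <;> simp [conjMatrix] <;> ring

theorem conjMatrix_coe (r : R) : conjMatrix (r : ℍ[R]) = r ^ 2 • 1 := by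
  ext i j
  fin_cases i <;> fin_cases j <;> simp [conjMatrix]

theorem conjMatrix_one : conjMatrix (1 : ℍ[R]) = 1 := by
  simpa using conjMatrix_coe (1 : R)

theorem conjMatrix_smul (r : R) (q : ℍ[R]) : conjMatrix (r • q) = r ^ 2 • conjMatrix q := by
  rw [← coe_mul_eq_smul, conjMatrix_mul, conjMatrix_coe, smul_one_mul]

theorem conjMatrix_mul_transpose (q : ℍ[R]) :
    conjMatrix q * (conjMatrix q)ᵀ = normSq q ^ 2 • 1 := by
  rw [← conjMatrix_star, ← conjMatrix_mul, Quaternion.self_mul_star, conjMatrix_coe]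

theorem det_conjMatrix (q : ℍ[R]) : (conjMatrix q).det = normSq q ^ 3 := by
  simp [conjMatrix, det_fin_three, normSq_def']
  ring

theorem trace_conjMatrix (q : ℍ[R]) : (conjMatrix q).trace = 4 * q.re ^ 2 - normSq q := by
  simp [conjMatrix, trace_fin_three, normSq_def']
  ring

theorem conjMatrix_eq_smul_of_mul_eq_mul {q : ℍ[R]} {g : Matrix (Fin 3) (Fin 3) R}
    (h : ∀ v, pureQuaternion (g *ᵥ v) * q = q * pureQuaternion v) :
    conjMatrix q = normSq q • g := by
  refine ext_of_mulVec_single fun i => pureQuaternion_injective ?_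
  rw [pureQuaternion_conjMatrix_mulVec, ← h, mul_assoc, Quaternion.self_mul_star,
    mul_coe_eq_smul, smul_mulVec, pureQuaternion_smul]

end Conjugation

section Intertwiner

variable {R A : Type*} [CommRing R] [Ring A] [Algebra R A]
  (b c : QuaternionAlgebra.Basis A (-1 : R) 0 (-1)) (x : A)

/-- The sum `∑ b.u * x * c.u⁻¹` over the units `u = 1, i, j, k`. Averaging over the quaternion
group makes it intertwine the two quaternion structures `b` and `c` (as in the proof of the
Skolem–Noether theorem). -/
def intertwiner : A :=
  x - b.i * x * c.i - b.j * x * c.j - b.k * x * c.k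

theorem i_mul_intertwiner : b.i * intertwiner b c x = intertwiner b c x * c.i := by
  simp only [intertwiner, mul_sub, sub_mul, ← mul_assoc]
  simp [mul_assoc]
  abel

theorem j_mul_intertwiner : b.j * intertwiner b c x = intertwiner b c x * c.j := by
  simp only [intertwiner, mul_sub, sub_mul, ← mul_assoc]
  simp [mul_assoc]
  abel

theorem k_mul_intertwiner : b.k * intertwiner b c x = intertwiner b c x * c.k := by
  rw [← b.i_mul_j, ← c.i_mul_j, mul_assoc, j_mul_intertwiner, ← mul_assoc, i_mul_intertwiner,
    mul_assoc]

theorem lift_mul_intertwiner (q : ℍ[R]) :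
    b.lift q * intertwiner b c x = intertwiner b c x * c.lift q := by
  simp only [QuaternionAlgebra.Basis.lift, add_mul, mul_add, smul_mul_assoc, mul_smul_comm,
    i_mul_intertwiner, j_mul_intertwiner, k_mul_intertwiner, Algebra.commutes]

end Intertwiner

section Orthogonal

variable {R : Type*} [CommRing R]

theorem dotProduct_mulVec_of_transpose_mul_self {m n : Type*} [Fintype m] [Fintype n]
    [DecidableEq n] {g : Matrix m n R} (hg : gᵀ * g = 1) (v w : n → R) :
    (g *ᵥ v) ⬝ᵥ (g *ᵥ w) = v ⬝ᵥ w := by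
  rw [dotProduct_mulVec, ← mulVec_transpose, mulVec_mulVec, hg, one_mulVec]

theorem adjugate_eq_transpose {n : Type*} [Fintype n] [DecidableEq n] {g : Matrix n n R}
    (hg : gᵀ * g = 1) (hdet : g.det = 1) : g.adjugate = gᵀ := by
  calc g.adjugate = gᵀ * g * g.adjugate := by rw [hg, one_mul]
    _ = gᵀ := by rw [mul_assoc, mul_adjugate, hdet, one_smul, mul_one]

theorem mulVec_cross_mulVec (g : Matrix (Fin 3) (Fin 3) R) (v w : Fin 3 → R) :
    (g *ᵥ v) ⨯₃ (g *ᵥ w) = g.adjugateᵀ *ᵥ (v ⨯₃ w) := by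
  ext i
  fin_cases i <;>
    simp [cross_apply, adjugate_fin_three, mulVec, dotProduct, Fin.sum_univ_three] <;> ring

variable {g : Matrix (Fin 3) (Fin 3) R} (hg : gᵀ * g = 1) (hdet : g.det = 1)

include hg hdet in
theorem pureQuaternion_mulVec_mul (v w : Fin 3 → R) :
    pureQuaternion (g *ᵥ v) * pureQuaternion (g *ᵥ w) =
      -((v ⬝ᵥ w : R) : ℍ[R]) + pureQuaternion (g *ᵥ (v ⨯₃ w)) := by
  rw [pureQuaternion_mul, dotProduct_mulVec_of_transpose_mul_self hg, mulVec_cross_mulVec,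
    adjugate_eq_transpose hg hdet, transpose_transpose]

/-- The quaternion units `i`, `j`, `k` rotated by a special orthogonal matrix `g`; they satisfy
the same multiplication table. -/
@[simps]
def rotatedBasis : QuaternionAlgebra.Basis ℍ[R] (-1 : R) 0 (-1) where
  i := pureQuaternion (g *ᵥ ![1, 0, 0])
  j := pureQuaternion (g *ᵥ ![0, 1, 0])
  k := pureQuaternion (g *ᵥ ![0, 0, 1])
  i_mul_i := by rw [pureQuaternion_mulVec_mul hg hdet]; ext <;> simp
  j_mul_j := by rw [pureQuaternion_mulVec_mul hg hdet]; ext <;> simp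
  i_mul_j := by rw [pureQuaternion_mulVec_mul hg hdet]; ext <;> simp [cross_apply]
  j_mul_i := by
    rw [pureQuaternion_mulVec_mul hg hdet]
    ext <;> simp [cross_apply, mulVec, dotProduct, Fin.sum_univ_three]

theorem lift_rotatedBasis_pureQuaternion (v : Fin 3 → R) :
    (rotatedBasis hg hdet).lift (pureQuaternion v) = pureQuaternion (g *ᵥ v) := by
  ext <;> simp [QuaternionAlgebra.Basis.lift, mulVec, dotProduct, Fin.sum_univ_three] <;> ring

include hg hdet in
theorem exists_ne_zero_pureQuaternion_mulVec_mul_eq (h4 : (4 : R) ≠ 0) :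
    ∃ q : ℍ[R], q ≠ 0 ∧ ∀ v, pureQuaternion (g *ᵥ v) * q = q * pureQuaternion v := by
  let b := rotatedBasis hg hdet
  let c := rotatedBasis (g := (1 : Matrix (Fin 3) (Fin 3) R)) (by simp) (by simp)
  -- The linear map `intertwiner b c` has trace `4`, so it does not vanish.
  have trace_eq_four : (intertwiner b c 1).re + (intertwiner b c c.i).imI +
      (intertwiner b c c.j).imJ + (intertwiner b c c.k).imK = 4 := by
    simp [intertwiner, b, c]
    ring
  obtain ⟨x, hx⟩ : ∃ x, intertwiner b c x ≠ 0 := by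
    by_contra! h
    simp [h, h4.symm] at trace_eq_four
  refine ⟨_, hx, fun v => ?_⟩
  simpa only [lift_rotatedBasis_pureQuaternion, one_mulVec, b, c]
    using lift_mul_intertwiner b c x (pureQuaternion v)

end Orthogonal

section DoubleCover

/-- The double cover `S³ → SO(3)`, sending a unit quaternion to the rotation it induces on purely
imaginary quaternions by conjugation. -/
noncomputable def rotation : sphere (0 : ℍ[ℝ]) 1 →* specialOrthogonalGroup (Fin 3) ℝ where
  toFun q := ⟨conjMatrix q, by
    have hq : normSq (q : ℍ[ℝ]) = 1 := by
      rw [normSq_eq_norm_mul_self, norm_eq_of_mem_sphere, mul_one]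
    refine mem_specialOrthogonalGroup_iff.mpr ⟨(mem_orthogonalGroup_iff _ _).mpr ?_, ?_⟩
    · rw [conjMatrix_mul_transpose, hq, one_pow, one_smul]
    · rw [det_conjMatrix, hq, one_pow]⟩
  map_one' := Subtype.ext conjMatrix_one
  map_mul' p q := Subtype.ext (conjMatrix_mul (p : ℍ[ℝ]) q)

theorem coe_rotation (q : sphere (0 : ℍ[ℝ]) 1) :
    (rotation q : Matrix (Fin 3) (Fin 3) ℝ) = conjMatrix (q : ℍ[ℝ]) :=
  rfl

theorem trace_rotation (q : sphere (0 : ℍ[ℝ]) 1) :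
    trace (rotation q : Matrix (Fin 3) (Fin 3) ℝ) = 4 * (q : ℍ[ℝ]).re ^ 2 - 1 := by
  rw [coe_rotation, trace_conjMatrix, normSq_eq_norm_mul_self, norm_eq_of_mem_sphere, mul_one]

theorem continuous_conjMatrix : Continuous (conjMatrix : ℍ[ℝ] → Matrix (Fin 3) (Fin 3) ℝ) := by
  refine continuous_matrix fun i j => ?_
  have hcol : Continuous fun q : ℍ[ℝ] => pureQuaternion (conjMatrix q *ᵥ Pi.single j 1) := by
    simp only [pureQuaternion_conjMatrix_mulVec]
    fun_prop
  simp only [mulVec_single_one] at hcol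
  fin_cases i
  exacts [continuous_imI.comp hcol, continuous_imJ.comp hcol, continuous_imK.comp hcol]

theorem continuous_rotation : Continuous rotation :=
  (continuous_conjMatrix.comp continuous_subtype_val).subtype_mk _

theorem rotation_surjective : Function.Surjective rotation := by
  intro g
  obtain ⟨horth, hdet⟩ := mem_specialOrthogonalGroup_iff.mp g.2
  obtain ⟨q, hq, hconj⟩ := exists_ne_zero_pureQuaternion_mulVec_mul_eq
    ((mem_orthogonalGroup_iff' _ _).mp horth) hdet four_ne_zero
  refine ⟨⟨‖q‖⁻¹ • q, by simp [norm_smul, hq]⟩, Subtype.ext ?_⟩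
  rw [coe_rotation, conjMatrix_smul, conjMatrix_eq_smul_of_mul_eq_mul hconj, smul_smul,
    normSq_eq_norm_mul_self, ← sq, ← mul_pow, inv_mul_cancel₀ (norm_ne_zero_iff.mpr hq), one_pow,
    one_smul]

instance : CompactSpace (specialOrthogonalGroup (Fin 3) ℝ) :=
  rotation_surjective.compactSpace continuous_rotation

end DoubleCover

section InvariantMeasure

/-- Left multiplication by a unit quaternion, as a linear isometry of the quaternions. -/
noncomputable def mulLeftIsometry (p : sphere (0 : ℍ[ℝ]) 1) : ℍ[ℝ] ≃ₗᵢ[ℝ] ℍ[ℝ] :=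
  LinearIsometry.toLinearIsometryEquiv ⟨LinearMap.mulLeft ℝ (p : ℍ[ℝ]), fun q => by simp⟩ rfl

theorem mulLeftIsometry_apply (p : sphere (0 : ℍ[ℝ]) 1) (q : ℍ[ℝ]) :
    mulLeftIsometry p q = p * q :=
  rfl

theorem Ioo_smul_preimage_mul_left (p : sphere (0 : ℍ[ℝ]) 1) (s : Set (sphere (0 : ℍ[ℝ]) 1)) :
    Ioo (0 : ℝ) 1 • ((↑) '' ((p * ·) ⁻¹' s) : Set ℍ[ℝ]) =
      mulLeftIsometry p ⁻¹' (Ioo (0 : ℝ) 1 • ((↑) '' s)) := by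
  ext q
  simp only [mem_preimage, Set.mem_smul, mem_image, exists_exists_and_eq_and,
    mulLeftIsometry_apply]
  constructor
  · rintro ⟨r, hr, u, hu, rfl⟩
    exact ⟨r, hr, p * u, hu, by simp⟩
  · rintro ⟨r, hr, v, hv, h⟩
    refine ⟨r, hr, p⁻¹ * v, by simpa, (mulLeftIsometry p).injective ?_⟩
    simp [mulLeftIsometry_apply, ← h, mul_inv_cancel_left₀ (ne_zero_of_mem_unit_sphere p)]

variable [MeasurableSpace ℍ[ℝ]] [BorelSpace ℍ[ℝ]]

instance isHaarMeasure_toSphere : (volume : Measure ℍ[ℝ]).toSphere.IsHaarMeasure where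
  map_mul_left_eq_self p := by
    ext s hs
    have hmul : Measurable (p * ·) := measurable_const_mul p
    rw [Measure.map_apply hmul hs, Measure.toSphere_apply' _ (hmul hs),
      Ioo_smul_preimage_mul_left, (mulLeftIsometry p).measurePreserving.measure_preimage_emb
        (mulLeftIsometry p).toMeasurableEquiv.measurableEmbedding, Measure.toSphere_apply' _ hs]

theorem exists_eq_smul_map_rotation [MeasurableSpace (specialOrthogonalGroup (Fin 3) ℝ)]
    [BorelSpace (specialOrthogonalGroup (Fin 3) ℝ)]
    (μ : Measure (specialOrthogonalGroup (Fin 3) ℝ)) [μ.IsHaarMeasure] :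
    ∃ c : ℝ≥0∞, μ = c • (volume : Measure ℍ[ℝ]).toSphere.map rotation := by
  have := Measure.isHaarMeasure_map_of_isFiniteMeasure (volume : Measure ℍ[ℝ]).toSphere rotation
    continuous_rotation rotation_surjective
  exact ⟨_, Measure.isMulInvariant_eq_smul_of_compactSpace μ _⟩

end InvariantMeasure

section PolarCoordinates

theorem lintegral_upperHalfPlane_polar {H : ℝ → ℝ → ℝ≥0∞} (hH : Measurable H.uncurry) :
    ∫⁻ a, ∫⁻ s in Ioi 0, H a s =
      ∫⁻ r in Ioi 0, ∫⁻ θ in Ioo 0 π, ENNReal.ofReal r * H (r * cos θ) (r * sin θ) := by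
  let K : ℝ × ℝ → ℝ≥0∞ := fun p => (Ioi 0).indicator (H p.1) p.2
  have hK : Measurable K := hH.indicator (measurable_snd measurableSet_Ioi)
  calc ∫⁻ a, ∫⁻ s in Ioi 0, H a s
      = ∫⁻ p, K p := by
        rw [Measure.volume_eq_prod, lintegral_prod _ hK.aemeasurable]
        simp only [K, lintegral_indicator measurableSet_Ioi]
    _ = ∫⁻ r in Ioi 0, ∫⁻ θ in Ioo (-π) π, ENNReal.ofReal r * K (r * cos θ, r * sin θ) := by
        rw [← lintegral_comp_polarCoord_symm, polarCoord_target, Measure.volume_eq_prod,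
          ← Measure.prod_restrict]
        exact lintegral_prod _ (by fun_prop)
    _ = ∫⁻ r in Ioi 0, ∫⁻ θ in Ioo 0 π, ENNReal.ofReal r * H (r * cos θ) (r * sin θ) := by
        refine setLIntegral_congr_fun measurableSet_Ioi fun r (hr : 0 < r) => ?_
        have hinter : Ioo 0 π = Ioi 0 ∩ Ioo (-π) π := by
          rw [← Ioi_inter_Iio, ← Ioi_inter_Iio, ← inter_assoc, Ioi_inter_Ioi,
            sup_of_le_left (neg_nonpos.mpr pi_pos.le)]
        rw [hinter, ← setLIntegral_indicator measurableSet_Ioi]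
        refine setLIntegral_congr_fun measurableSet_Ioo fun θ hθ => ?_
        rcases lt_or_ge 0 θ with h | h
        · have hs : 0 < r * sin θ := mul_pos hr (sin_pos_of_pos_of_lt_pi h hθ.2)
          simp [K, h, hs]
        · have hs : r * sin θ ≤ 0 := mul_nonpos_of_nonneg_of_nonpos hr.le
            (sin_nonpos_of_nonpos_of_neg_pi_le h hθ.1.le)
          simp [K, h, hs]

variable {E : Type*} [NormedAddCommGroup E] [NormedSpace ℝ E] [FiniteDimensional ℝ E]
  [Nontrivial E] [MeasurableSpace E] [BorelSpace E] (μ : Measure E) [μ.IsAddHaarMeasure]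

theorem lintegral_eq_lintegral_Ioi_sphere {F : E → ℝ≥0∞} (hF : Measurable F) :
    ∫⁻ x, F x ∂μ = ∫⁻ r in Ioi (0 : ℝ), ENNReal.ofReal (r ^ (finrank ℝ E - 1)) *
      ∫⁻ u, F (r • (u : E)) ∂μ.toSphere := by
  let G (p : sphere (0 : E) 1 × Ioi (0 : ℝ)) : ℝ≥0∞ := F ((p.2 : ℝ) • (p.1 : E))
  have hG : Measurable G := by fun_prop
  calc ∫⁻ x, F x ∂μ
      = ∫⁻ x : ({0}ᶜ : Set E), F (x : E) ∂μ.comap (↑) := by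
        rw [lintegral_subtype_comap (measurableSet_singleton _).compl, restrict_compl_singleton]
    _ = ∫⁻ p, G p ∂μ.toSphere.prod (.volumeIoiPow (finrank ℝ E - 1)) := by
        rw [← μ.measurePreserving_homeomorphUnitSphereProd.lintegral_comp_emb
          (Homeomorph.measurableEmbedding _)]
        refine lintegral_congr fun x => congrArg F ?_
        exact congrArg Subtype.val ((homeomorphUnitSphereProd E).symm_apply_apply x).symm
    _ = ∫⁻ r : Ioi (0 : ℝ), ENNReal.ofReal ((r : ℝ) ^ (finrank ℝ E - 1)) *
          ∫⁻ u, G (u, r) ∂μ.toSphere ∂volume.comap Subtype.val := by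
        rw [lintegral_prod_symm _ hG.aemeasurable, Measure.volumeIoiPow,
          lintegral_withDensity_eq_lintegral_mul _ (by fun_prop) hG.lintegral_prod_left']
        rfl
    _ = _ := lintegral_subtype_comap measurableSet_Ioi fun r : ℝ =>
        ENNReal.ofReal (r ^ (finrank ℝ E - 1)) * ∫⁻ u, F (r • (u : E)) ∂μ.toSphere

theorem lintegral_comp_norm {f : ℝ → ℝ≥0∞} (hf : Measurable f) :
    ∫⁻ x, f ‖x‖ ∂μ = μ.toSphere univ *
      ∫⁻ r in Ioi (0 : ℝ), ENNReal.ofReal (r ^ (finrank ℝ E - 1)) * f r := by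
  rw [lintegral_eq_lintegral_Ioi_sphere μ (by fun_prop), ← lintegral_const_mul _ (by fun_prop)]
  refine setLIntegral_congr_fun measurableSet_Ioi fun r (hr : 0 < r) => ?_
  simp only [norm_smul, norm_eq_abs, abs_of_pos hr, norm_eq_of_mem_sphere, mul_one,
    lintegral_const]
  ring

end PolarCoordinates

section Latitude

variable {E : Type*} [NormedAddCommGroup E] [InnerProductSpace ℝ E] [FiniteDimensional ℝ E]
  [MeasurableSpace E] [BorelSpace E] {e : E} (he : ‖e‖ = 1)
include he

theorem measurePreserving_smul_add_orthogonal :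
    MeasurePreserving (fun p : ℝ × (ℝ ∙ e)ᗮ => p.1 • e + p.2) := by
  let toSpan := LinearIsometryEquiv.toSpanUnitSingleton (𝕜 := ℝ) e he
  have hprod : MeasurePreserving (Prod.map toSpan (id : (ℝ ∙ e)ᗮ → (ℝ ∙ e)ᗮ)) :=
    toSpan.measurePreserving.prod (.id volume)
  exact ((ℝ ∙ e).orthogonalDecomposition.symm.measurePreserving.comp
    (WithLp.volume_preserving_toLp _ _)).comp hprod

theorem lintegral_inner_norm {H : ℝ → ℝ → ℝ≥0∞} (hH : Measurable H.uncurry) :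
    ∫⁻ x, H ⟪e, x⟫ ‖x‖ = ∫⁻ a, ∫⁻ y : (ℝ ∙ e)ᗮ, H a √(a ^ 2 + ‖y‖ ^ 2) := by
  rw [← (measurePreserving_smul_add_orthogonal he).lintegral_comp (by fun_prop),
    Measure.volume_eq_prod, lintegral_prod _ (by fun_prop)]
  refine lintegral_congr fun a => lintegral_congr fun y => ?_
  have hy : ⟪e, (y : E)⟫ = 0 := Submodule.mem_orthogonal_singleton_iff_inner_right.mp y.2
  congr 1
  · simp [inner_add_right, inner_smul_right, hy, he]
  · rw [eq_comm, sqrt_eq_iff_mul_self_eq (by positivity) (by positivity), norm_add_mul_self_real]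
    simp [inner_smul_left, norm_smul, hy, he]
    ring

variable {n : ℕ} (hn : finrank ℝ E = n + 2)
include hn

theorem lintegral_inner_norm_polar {H : ℝ → ℝ → ℝ≥0∞} (hH : Measurable H.uncurry) :
    ∫⁻ x, H ⟪e, x⟫ ‖x‖ = (volume : Measure (ℝ ∙ e)ᗮ).toSphere univ *
      ∫⁻ r in Ioi 0, ∫⁻ θ in Ioo 0 π,
        ENNReal.ofReal (r ^ (n + 1)) * (ENNReal.ofReal (sin θ ^ n) * H (r * cos θ) r) := by
  have : Fact (finrank ℝ E = n + 1 + 1) := ⟨hn⟩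
  have hdim : finrank ℝ (ℝ ∙ e)ᗮ = n + 1 :=
    Submodule.finrank_orthogonal_span_singleton (by rintro rfl; simp at he)
  have : Nontrivial (ℝ ∙ e)ᗮ := nontrivial_of_finrank_pos (R := ℝ) (by lia)
  rw [lintegral_inner_norm he hH]
  calc ∫⁻ a, ∫⁻ y : (ℝ ∙ e)ᗮ, H a √(a ^ 2 + ‖y‖ ^ 2)
      = ∫⁻ a, (volume : Measure (ℝ ∙ e)ᗮ).toSphere univ *
          ∫⁻ s in Ioi 0, ENNReal.ofReal (s ^ n) * H a √(a ^ 2 + s ^ 2) := by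
        refine lintegral_congr fun a => ?_
        rw [lintegral_comp_norm volume (f := fun s => H a √(a ^ 2 + s ^ 2)) (by fun_prop), hdim,
          Nat.add_sub_cancel]
    _ = _ := by
        rw [lintegral_const_mul _ (by fun_prop), lintegral_upperHalfPlane_polar (by fun_prop)]
        congr 1
        refine setLIntegral_congr_fun measurableSet_Ioi fun r (hr : 0 < r) =>
          setLIntegral_congr_fun measurableSet_Ioo fun θ _ => ?_
        have hnorm : √((r * cos θ) ^ 2 + (r * sin θ) ^ 2) = r := by
          rw [mul_pow, mul_pow, ← mul_add, cos_sq_add_sin_sq, mul_one, sqrt_sq hr.le]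
        simp only [hnorm]
        rw [mul_pow, ENNReal.ofReal_mul (by positivity), pow_succ', ENNReal.ofReal_mul hr.le]
        ring

theorem lintegral_toSphere_inner {f : ℝ → ℝ≥0∞} (hf : Measurable f) :
    ∫⁻ u : sphere (0 : E) 1, f ⟪e, (u : E)⟫ ∂(volume : Measure E).toSphere =
      (volume : Measure (ℝ ∙ e)ᗮ).toSphere univ *
        ∫⁻ θ in Ioo 0 π, ENNReal.ofReal (sin θ ^ n) * f (cos θ) := by
  have : Nontrivial E := nontrivial_of_finrank_pos (R := ℝ) (by lia)
  -- A radial weight that cancels the Jacobian `r ^ (n + 1)` and has total mass `1`.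
  let w : ℝ → ℝ≥0∞ := (Iio 1).indicator fun r => (ENNReal.ofReal (r ^ (n + 1)))⁻¹
  have hw_meas : Measurable w := Measurable.indicator (by fun_prop) measurableSet_Iio
  have hw (c : ℝ≥0∞) : ∫⁻ r in Ioi 0, ENNReal.ofReal (r ^ (n + 1)) * (w r * c) = c := by
    calc _ = ∫⁻ r in Ioi (0 : ℝ), (Iio 1).indicator (fun _ => c) r := by
          refine setLIntegral_congr_fun measurableSet_Ioi fun r (hr : 0 < r) => ?_
          have hne : ENNReal.ofReal (r ^ (n + 1)) ≠ 0 := by simpa using pow_pos hr _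
          by_cases h : r < 1
          · simp only [w, mem_Iio, h, indicator_of_mem]
            rw [← mul_assoc, ENNReal.mul_inv_cancel hne ENNReal.ofReal_ne_top, one_mul]
          · simp [w, h]
      _ = c := by
          rw [setLIntegral_indicator measurableSet_Iio, inter_comm, Ioi_inter_Iio,
            setLIntegral_const]
          simp
  let H (a r : ℝ) : ℝ≥0∞ := w r * f (a / r)
  calc ∫⁻ u : sphere (0 : E) 1, f ⟪e, (u : E)⟫ ∂(volume : Measure E).toSphere
      = ∫⁻ x : E, H ⟪e, x⟫ ‖x‖ := by
        rw [lintegral_eq_lintegral_Ioi_sphere volume (by fun_prop), hn, ← hw (∫⁻ u, _ ∂_)]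
        refine setLIntegral_congr_fun measurableSet_Ioi fun r (hr : 0 < r) => ?_
        simp only [H, inner_smul_right, norm_smul, norm_eq_of_mem_sphere, mul_one, norm_eq_abs,
          abs_of_pos hr, mul_div_cancel_left₀ _ hr.ne']
        rw [lintegral_const_mul _ (by fun_prop)]
        rfl
    _ = _ := by
        rw [lintegral_inner_norm_polar he hn (by fun_prop)]
        congr 1
        refine Eq.trans ?_ (hw _)
        refine setLIntegral_congr_fun measurableSet_Ioi fun r (hr : 0 < r) => ?_
        simp only [H, mul_div_cancel_left₀ _ hr.ne', mul_left_comm _ (w r)]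
        rw [lintegral_const_mul _ (by fun_prop), lintegral_const_mul _ (by fun_prop)]

end Latitude

section AngleDoubling

theorem lintegral_Ioo_comp_cos_two_mul {g : ℝ → ℝ≥0∞} (hg : Measurable g) :
    ∫⁻ θ in Ioo 0 π, g (cos (2 * θ)) = ∫⁻ s in Ioo 0 π, g (cos s) := by
  have hscale : ∫⁻ s in Ioo 0 (2 * π), g (cos s) = 2 * ∫⁻ θ in Ioo 0 π, g (cos (2 * θ)) := by
    have himage : Ioo 0 (2 * π) = (2 * ·) '' Ioo 0 π := by
      rw [image_mul_left_Ioo two_pos, mul_zero]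
    rw [himage, lintegral_image_eq_lintegral_abs_deriv_mul measurableSet_Ioo
      (fun θ _ => (hasDerivAt_const_mul 2).hasDerivWithinAt)
      (mul_right_injective₀ two_ne_zero).injOn, lintegral_const_mul _ (by fun_prop)]
    simp
  have hreflect : ∫⁻ s in Ioo π (2 * π), g (cos s) = ∫⁻ s in Ioo 0 π, g (cos s) := by
    rw [← (Measure.measurePreserving_sub_left volume (2 * π)).setLIntegral_comp_preimage
      measurableSet_Ioo (by fun_prop), preimage_const_sub_Ioo, sub_self, two_mul,
      add_sub_cancel_right, ← two_mul]
    simp only [cos_two_pi_sub]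
  have hsplit : ∫⁻ s in Ioo 0 (2 * π), g (cos s) =
      (∫⁻ s in Ioo 0 π, g (cos s)) + ∫⁻ s in Ioo π (2 * π), g (cos s) := by
    have hπ : π < 2 * π := lt_two_mul_self pi_pos
    have hdisj : Disjoint (Ioc 0 π) (Ioo π (2 * π)) :=
      disjoint_left.mpr fun s hs hs' => hs.2.not_gt hs'.1
    rw [← Ioc_union_Ioo_eq_Ioo pi_pos.le hπ, lintegral_union measurableSet_Ioo hdisj,
      setLIntegral_congr (Ioo_ae_eq_Ioc (a := 0) (b := π))]
  rw [hscale, hreflect, ← two_mul] at hsplit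
  exact (ENNReal.mul_right_inj two_ne_zero ENNReal.ofNat_ne_top).mp hsplit

theorem lintegral_Ioo_sin_sq_mul_comp_cos_sq {f : ℝ → ℝ≥0∞} (hf : Measurable f) :
    ∫⁻ θ in Ioo 0 π, ENNReal.ofReal (sin θ ^ 2) * f (4 * cos θ ^ 2 - 1) =
      ∫⁻ s in Ioo 0 π, ENNReal.ofReal ((1 - cos s) / 2) * f (1 + 2 * cos s) := by
  rw [← lintegral_Ioo_comp_cos_two_mul
    (g := fun x => ENNReal.ofReal ((1 - x) / 2) * f (1 + 2 * x)) (by fun_prop)]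
  refine lintegral_congr fun θ => ?_
  congr 2
  · rw [sin_sq, cos_two_mul]
    ring
  · rw [cos_two_mul]
    ring

theorem lintegral_Ioo_one_sub_cos_div_two :
    ∫⁻ s in Ioo 0 π, ENNReal.ofReal ((1 - cos s) / 2) = ENNReal.ofReal (π / 2) := by
  have hint : IntervalIntegrable (fun s => (1 - cos s) / 2) volume 0 π :=
    Continuous.intervalIntegrable (by fun_prop) _ _
  have hnonneg (s : ℝ) : 0 ≤ (1 - cos s) / 2 := by linarith [cos_le_one s]
  rw [setLIntegral_congr Ioo_ae_eq_Ioc, ← ofReal_integral_eq_lintegral_ofReal hint.1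
    (.of_forall hnonneg), ← intervalIntegral.integral_of_le pi_pos.le]
  simp [intervalIntegral.integral_div, intervalIntegral.integral_sub]

end AngleDoubling

section WeylIntegration

variable [MeasurableSpace (specialOrthogonalGroup (Fin 3) ℝ)]
  [BorelSpace (specialOrthogonalGroup (Fin 3) ℝ)]

theorem measurable_trace :
    Measurable fun g : specialOrthogonalGroup (Fin 3) ℝ => (g : Matrix (Fin 3) (Fin 3) ℝ).trace :=
  continuous_subtype_val.matrix_trace.measurable

variable (μ : Measure (specialOrthogonalGroup (Fin 3) ℝ)) [μ.IsHaarMeasure]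

theorem exists_lintegral_trace_eq :
    ∃ C : ℝ≥0∞, ∀ f : ℝ → ℝ≥0∞, Measurable f →
      ∫⁻ g, f (trace (g : Matrix (Fin 3) (Fin 3) ℝ)) ∂μ =
        C * ∫⁻ s in Ioo 0 π, ENNReal.ofReal ((1 - cos s) / 2) * f (1 + 2 * cos s) := by
  borelize ℍ[ℝ]
  obtain ⟨c, hc⟩ := exists_eq_smul_map_rotation μ
  refine ⟨c * (volume : Measure (ℝ ∙ (1 : ℍ[ℝ]))ᗮ).toSphere univ, fun f hf => ?_⟩
  calc ∫⁻ g, f (trace (g : Matrix (Fin 3) (Fin 3) ℝ)) ∂μ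
      = c * ∫⁻ q : sphere (0 : ℍ[ℝ]) 1, f (4 * ⟪(1 : ℍ[ℝ]), q⟫ ^ 2 - 1) ∂volume.toSphere := by
        rw [hc, lintegral_smul_measure, lintegral_map (f := fun g => f (trace g.1))
          (hf.comp measurable_trace) continuous_rotation.measurable]
        simp [trace_rotation, Quaternion.inner_def]
    _ = c * (volume : Measure (ℝ ∙ (1 : ℍ[ℝ]))ᗮ).toSphere univ *
          ∫⁻ θ in Ioo 0 π, ENNReal.ofReal (sin θ ^ 2) * f (4 * cos θ ^ 2 - 1) := by
        rw [lintegral_toSphere_inner norm_one (n := 2) Quaternion.finrank_eq_four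
          (f := fun x => f (4 * x ^ 2 - 1)) (by fun_prop), mul_assoc]
    _ = _ := by rw [lintegral_Ioo_sin_sq_mul_comp_cos_sq hf]

variable [IsProbabilityMeasure μ]

theorem lintegral_trace_eq {f : ℝ → ℝ≥0∞} (hf : Measurable f) :
    ∫⁻ g, f (trace (g : Matrix (Fin 3) (Fin 3) ℝ)) ∂μ =
      ∫⁻ s in Ioo 0 π, ENNReal.ofReal (1 / π * (1 - cos s)) * f (1 + 2 * cos s) := by
  obtain ⟨C, hC⟩ := exists_lintegral_trace_eq μ
  have hC_eq : C = ENNReal.ofReal (2 / π) := by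
    have hone := hC 1 measurable_one
    simp only [Pi.one_apply, mul_one, lintegral_one, measure_univ,
      lintegral_Ioo_one_sub_cos_div_two] at hone
    rw [ENNReal.eq_inv_of_mul_eq_one_left hone.symm,
      ← ENNReal.ofReal_inv_of_pos (by positivity), inv_div]
  rw [hC f hf, hC_eq, ← lintegral_const_mul _ (by fun_prop)]
  refine lintegral_congr fun s => ?_
  rw [← mul_assoc, ← ENNReal.ofReal_mul (by positivity)]
  congr 2
  ring

/-- The rotation angle in `[0, π]` of an element of `SO(3)`, denoted `t` in the statement. -/
noncomputable def rotationAngle (g : specialOrthogonalGroup (Fin 3) ℝ) : ℝ :=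
  arccos ((trace (g : Matrix (Fin 3) (Fin 3) ℝ) - 1) / 2)

theorem measurable_rotationAngle : Measurable rotationAngle :=
  continuous_arccos.measurable.comp ((measurable_trace.sub_const 1).div_const 2)

theorem map_rotationAngle :
    μ.map rotationAngle =
      (volume.restrict (Icc 0 π)).withDensity fun s => ENNReal.ofReal (1 / π * (1 - cos s)) := by
  refine Measure.ext_of_lintegral _ fun f hf => ?_
  calc ∫⁻ s, f s ∂μ.map rotationAngle
      = ∫⁻ g, f (arccos ((trace (g : Matrix (Fin 3) (Fin 3) ℝ) - 1) / 2)) ∂μ :=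
        lintegral_map hf measurable_rotationAngle
    _ = ∫⁻ s in Ioo 0 π, ENNReal.ofReal (1 / π * (1 - cos s)) *
          f (arccos ((1 + 2 * cos s - 1) / 2)) :=
        lintegral_trace_eq μ (f := fun x => f (arccos ((x - 1) / 2))) (by fun_prop)
    _ = ∫⁻ s in Ioo 0 π, ENNReal.ofReal (1 / π * (1 - cos s)) * f s := by
        refine setLIntegral_congr_fun measurableSet_Ioo fun s hs => ?_
        simp only [add_sub_cancel_left, mul_div_cancel_left₀ _ (two_ne_zero (α := ℝ)),
          arccos_cos hs.1.le hs.2.le]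
    _ = _ := by
        rw [setLIntegral_congr Ioo_ae_eq_Icc,
          lintegral_withDensity_eq_lintegral_mul _ (by fun_prop) hf]
        rfl

end WeylIntegration

end RotationAngle

open MeasureTheory Real in
/-- Under the normalized Haar measure of `SO(3)`, the rotation angle
`t(g) = arccos((tr g - 1)/2)` has density `s ↦ (1/π)(1 - cos s)` on `[0, π]`. -/
theorem haar_SO3_rotation_angle_density
    [MeasurableSpace (Matrix.specialOrthogonalGroup (Fin 3) ℝ)]
    [BorelSpace (Matrix.specialOrthogonalGroup (Fin 3) ℝ)]
    (μ : Measure (Matrix.specialOrthogonalGroup (Fin 3) ℝ))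
    [μ.IsHaarMeasure] [IsProbabilityMeasure μ] (A : Set ℝ) (hA : MeasurableSet A) :
    μ {g : Matrix.specialOrthogonalGroup (Fin 3) ℝ |
        arccos ((Matrix.trace ((g : Matrix (Fin 3) (Fin 3) ℝ)) - 1) / 2) ∈ A} =
      ENNReal.ofReal (∫ s in A ∩ Set.Icc 0 π, (1 / π) * (1 - cos s)) := by
  have hint : IntegrableOn (fun s => 1 / π * (1 - cos s)) (A ∩ Set.Icc 0 π) :=
    (Continuous.integrableOn_Icc (by fun_prop)).mono_set Set.inter_subset_right
  have hnonneg (s : ℝ) : 0 ≤ 1 / π * (1 - cos s) :=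
    mul_nonneg (by positivity) (sub_nonneg.mpr (cos_le_one s))
  calc μ (RotationAngle.rotationAngle ⁻¹' A)
      = μ.map RotationAngle.rotationAngle A :=
        (Measure.map_apply RotationAngle.measurable_rotationAngle hA).symm
    _ = ∫⁻ s in A ∩ Set.Icc 0 π, ENNReal.ofReal (1 / π * (1 - cos s)) := by
        rw [RotationAngle.map_rotationAngle, withDensity_apply _ hA, Measure.restrict_restrict hA]
    _ = ENNReal.ofReal (∫ s in A ∩ Set.Icc 0 π, 1 / π * (1 - cos s)) :=
        (ofReal_integral_eq_lintegral_ofReal hint (.of_forall hnonneg)).symm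
end

section
/- Let SO(3) be the group of 3×3 real special orthogonal matrices, and define d(g,h) = arccos((tr(g h⁻¹) − 1)/2) for g,h ∈ SO(3) (the distance induced by the bi-invariant Riemannian metric). Then d is NOT a restricted negative definite kernel on SO(3): there exist n, elements g₁,…,gₙ ∈ SO(3) and ξ₁,…,ξₙ ∈ ℂ with ∑ᵢ ξᵢ = 0 such that the real part of ∑_{i,j} d(gᵢ,gⱼ) ξᵢ conj(ξⱼ) is strictly positive. -/
/-- A restricted negative definite kernel on `X`, also called conditionally negative definite: a
symmetric function whose quadratic form is nonpositive on complex weights of total mass zero. -/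
structure IsRestrictedNegDef {X : Type*} (k : X → X → ℝ) : Prop where
  symm : ∀ x y, k x y = k y x
  re_sum_nonpos : ∀ (n : ℕ) (x : Fin n → X) (ξ : Fin n → ℂ), ∑ i, ξ i = 0 →
    (∑ i, ∑ j, (k (x i) (x j) : ℂ) * ξ i * (starRingEnd ℂ) (ξ j)).re ≤ 0

namespace IsRestrictedNegDef

variable {X : Type*} {k : X → X → ℝ}

theorem sum_nonpos (hk : IsRestrictedNegDef k) {n : ℕ} (x : Fin n → X) (w : Fin n → ℝ)
    (hw : ∑ i, w i = 0) : ∑ i, ∑ j, k (x i) (x j) * w i * w j ≤ 0 := by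
  have hre := hk.re_sum_nonpos n x (fun i ↦ (w i : ℂ)) (mod_cast hw)
  simpa only [Complex.conj_ofReal, ← Complex.ofReal_mul, ← Complex.ofReal_sum,
    Complex.ofReal_re] using hre

theorem sum_add_sum_le_two_mul_sum (hk : IsRestrictedNegDef k) {m n : ℕ} (a : Fin m → X)
    (b : Fin n → X) (p : Fin m → ℝ) (q : Fin n → ℝ) (hpq : ∑ i, p i = ∑ j, q j) :
    ∑ i, ∑ j, k (a i) (a j) * p i * p j + ∑ i, ∑ j, k (b i) (b j) * q i * q j ≤
      2 * ∑ i, ∑ j, k (a i) (b j) * p i * q j := by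
  have h := hk.sum_nonpos (Fin.append a b) (Fin.append p (-q))
    (by simp [Fin.sum_univ_add, hpq])
  have cross_comm : ∑ j, ∑ i, k (b j) (a i) * q j * p i = ∑ i, ∑ j, k (a i) (b j) * p i * q j := by
    rw [Finset.sum_comm]
    simp only [hk.symm (b _), mul_right_comm]
  simp only [Fin.sum_univ_add, Fin.append_left, Fin.append_right, Pi.neg_apply, mul_neg, neg_mul,
    Finset.sum_add_distrib, Finset.sum_neg_distrib, cross_comm] at h
  linarith

end IsRestrictedNegDef

section Matrix

open Matrix

variable {n R : Type*} [Fintype n] [DecidableEq n] [CommRing R]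

theorem diagonal_mem_specialOrthogonalGroup {v : n → R} (hv : ∀ i, v i * v i = 1)
    (hdet : ∏ i, v i = 1) : diagonal v ∈ specialOrthogonalGroup n R := by
  rw [mem_specialOrthogonalGroup_iff, mem_orthogonalGroup_iff]
  refine ⟨?_, by rw [det_diagonal, hdet]⟩
  rw [diagonal_transpose, diagonal_mul_diagonal, ← diagonal_one]
  exact congrArg diagonal (funext hv)

theorem permMatrix_mem_specialOrthogonalGroup {σ : Equiv.Perm n} (hσ : σ.sign = 1) :
    σ.permMatrix R ∈ specialOrthogonalGroup n R := by
  rw [mem_specialOrthogonalGroup_iff, mem_orthogonalGroup_iff]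
  refine ⟨?_, by simp [hσ]⟩
  rw [transpose_permMatrix, ← permMatrix_mul, inv_mul_cancel, permMatrix_one]

theorem trace_diagonal_mul_mul_diagonal (v w : n → R) (A : Matrix n n R) :
    trace (diagonal v * A * diagonal w) = ∑ i, v i * A i i * w i := by
  simp [trace]

theorem coe_mul_inv_specialOrthogonalGroup {n : ℕ} (g h : specialOrthogonalGroup (Fin n) ℝ) :
    ((g * h⁻¹ : specialOrthogonalGroup (Fin n) ℝ) : Matrix (Fin n) (Fin n) ℝ) = g.1 * h.1ᵀ :=
  rfl

end Matrix

section Rotations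

open Matrix Real

local notation "SO(3)" => specialOrthogonalGroup (Fin 3) ℝ

/-- The bi-invariant Riemannian distance on `SO(3)`: the rotation angle of `g h⁻¹`. -/
noncomputable def rotationDist (g h : SO(3)) : ℝ :=
  arccos ((trace ((g * h⁻¹ : SO(3)) : Matrix (Fin 3) (Fin 3) ℝ) - 1) / 2)

theorem rotationDist_comm (g h : SO(3)) : rotationDist g h = rotationDist h g := by
  unfold rotationDist
  rw [coe_mul_inv_specialOrthogonalGroup, coe_mul_inv_specialOrthogonalGroup, ← trace_transpose,
    transpose_mul, transpose_transpose]

theorem rotationDist_mul_right (g h c : SO(3)) :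
    rotationDist (g * c) (h * c) = rotationDist g h := by
  unfold rotationDist
  rw [_root_.mul_inv_rev, mul_assoc, mul_inv_cancel_left]

theorem rotationDist_self (g : SO(3)) : rotationDist g g = 0 := by
  norm_num [rotationDist]

theorem rotationDist_eq_pi {g h : SO(3)} (htr : trace (g.1 * h.1ᵀ) = -1) :
    rotationDist g h = π := by
  rw [rotationDist, coe_mul_inv_specialOrthogonalGroup, htr]
  norm_num

theorem rotationDist_eq_two_pi_div_three {g h : SO(3)} (htr : trace (g.1 * h.1ᵀ) = 0) :
    rotationDist g h = 2 * π / 3 := by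
  rw [rotationDist, coe_mul_inv_specialOrthogonalGroup, htr, zero_sub, neg_div, arccos_neg,
    ← cos_pi_div_three, arccos_cos] <;> linarith [pi_pos]

/-- The diagonals of the elements of the Klein four-group of `SO(3)`. As points of `ℝ³` they are
the vertices of a regular tetrahedron, so that distinct ones have the same scalar product. -/
def tetrahedronVertex : Fin 4 → Fin 3 → ℝ :=
  ![![1, 1, 1], ![1, -1, -1], ![-1, 1, -1], ![-1, -1, 1]]

theorem tetrahedronVertex_mul_self (i : Fin 4) (j : Fin 3) :
    tetrahedronVertex i j * tetrahedronVertex i j = 1 := by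
  fin_cases i <;> fin_cases j <;> simp [tetrahedronVertex]

theorem prod_tetrahedronVertex (i : Fin 4) : ∏ j, tetrahedronVertex i j = 1 := by
  fin_cases i <;> simp [tetrahedronVertex, Fin.prod_univ_three]

theorem tetrahedronVertex_dotProduct {i j : Fin 4} (hij : i ≠ j) :
    tetrahedronVertex i ⬝ᵥ tetrahedronVertex j = -1 := by
  fin_cases i <;> fin_cases j <;> simp [tetrahedronVertex] at hij ⊢

/-- The Klein four-group in `SO(3)`: the identity and the half-turns about the coordinate axes. -/
def kleinFour (i : Fin 4) : SO(3) :=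
  ⟨diagonal (tetrahedronVertex i),
    diagonal_mem_specialOrthogonalGroup (tetrahedronVertex_mul_self i) (prod_tetrahedronVertex i)⟩

/-- The rotation of order three that permutes the coordinate axes cyclically. -/
def axisCycle : SO(3) :=
  ⟨(finRotate 3).permMatrix ℝ, permMatrix_mem_specialOrthogonalGroup (by simp)⟩

theorem axisCycle_apply_self (i : Fin 3) : axisCycle.1 i i = 0 := by
  fin_cases i <;> simp [axisCycle]

theorem rotationDist_kleinFour (i j : Fin 4) :
    rotationDist (kleinFour i) (kleinFour j) = if i = j then 0 else π := by
  split_ifs with hij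
  · rw [hij, rotationDist_self]
  · apply rotationDist_eq_pi
    simpa [kleinFour, dotProduct] using tetrahedronVertex_dotProduct hij

theorem rotationDist_kleinFour_mul_axisCycle (i j : Fin 4) :
    rotationDist (kleinFour i) (kleinFour j * axisCycle) = 2 * π / 3 := by
  apply rotationDist_eq_two_pi_div_three
  change trace (diagonal _ * (diagonal _ * axisCycle.1)ᵀ) = 0
  rw [transpose_mul, diagonal_transpose, ← mul_assoc, trace_diagonal_mul_mul_diagonal]
  simp only [transpose_apply, axisCycle_apply_self, mul_zero, zero_mul, Finset.sum_const_zero]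

theorem not_isRestrictedNegDef_rotationDist : ¬ IsRestrictedNegDef rotationDist := by
  intro h
  have hle := h.sum_add_sum_le_two_mul_sum kleinFour (fun i ↦ kleinFour i * axisCycle) 1 1 rfl
  simp only [rotationDist_mul_right, rotationDist_kleinFour, rotationDist_kleinFour_mul_axisCycle,
    Pi.one_apply, mul_one] at hle
  have within_coset : ∑ i : Fin 4, ∑ j : Fin 4, (if i = j then 0 else π) = 12 * π := by
    simp only [Fin.sum_univ_four, Fin.reduceEq, zero_ne_one, one_ne_zero, ↓reduceIte, zero_add,
      add_zero]
    ring
  have across_cosets : ∑ _i : Fin 4, ∑ _j : Fin 4, 2 * π / 3 = 16 * (2 * π / 3) := by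
    simp only [Finset.sum_const, Finset.card_univ, Fintype.card_fin, nsmul_eq_mul]
    ring
  rw [within_coset, across_cosets] at hle
  linarith [pi_pos]

end Rotations

open Real Finset in
/-- The bi-invariant distance `d(g,h) = arccos((tr(g h⁻¹) - 1)/2)` on `SO(3)` is NOT a
restricted negative definite kernel. -/
theorem SO3_dist_not_restricted_negdef :
    ∃ (n : ℕ) (g : Fin n → Matrix.specialOrthogonalGroup (Fin 3) ℝ) (ξ : Fin n → ℂ),
      (∑ i, ξ i) = 0 ∧
      0 < (∑ i, ∑ j,
        ((arccos ((Matrix.trace ((g i * (g j)⁻¹ :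
            Matrix.specialOrthogonalGroup (Fin 3) ℝ) : Matrix (Fin 3) (Fin 3) ℝ) - 1) / 2)
          : ℝ) : ℂ) * ξ i * (starRingEnd ℂ) (ξ j)).re := by
  by_contra! h
  exact not_isRestrictedNegDef_rotationDist ⟨rotationDist_comm, h⟩
end
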